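/- arXiv:1702.04969 — 3 statements merged into one kernel-verified Lean document; each statement's English description precedes it below -/
import Mathlib

section
/- Let 1 < p ≤ q < ∞ and let p' = p/(p-1). Let u, v : (0,∞) → [0,∞) be measurable. Then there exists a constant c > 0 such that (∫₀^∞ [u(x) ∫₀^x f(t) dt]^{q} dx)^{1/q} ≤ c (∫₀^∞ [f(x) v(x)]^{p} dx)^{1/p} holds for all non-negative measurable f : (0,∞) → [0,∞) if and only if sup_{r>0} (∫_r^∞ u(x)^{q} dx)^{1/q} (∫₀^r v(x)^{-p'} dx)^{1/p'} < ∞. -/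
open MeasureTheory Set ENNReal

open scoped NNReal

/-!
Work with two measures on a linear order, the left-hand weight being absorbed into `ν`, and write
`H f x = ∫_{t ≤ x} f dμ`.

Sufficiency. Cut the order into the dyadic levels `E_k = {2^k < H f ≤ 2^(k+1)}`. The set
`{H f ≤ a}` carries at most mass `a` of `f`, so for `x ∈ E_(k+1)` at least `2^k` of the mass of `f`
on `(-∞, x]` lies in `E_k ∪ E_(k+1)`. Hölder's inequality there, times `ν([x, ∞))^(1/q)`, and then
`x ↓ inf E_(k+1)` give `2^k ν(E_(k+1))^(1/q) ≤ B (∫_{E_k ∪ E_(k+1)} (f w)^p dμ)^(1/p)`. Summing the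
`q`-th powers over `k` uses `∑ a_k^(q/p) ≤ (∑ a_k)^(q/p)`, which is where `p ≤ q` enters.

Necessity. Test with simple functions `g ≤ w^(-p')` on `(-∞, r]` with finite integral: they satisfy
`(g w)^p ≤ g`, and their integrals exhaust that of `w^(-p')`, even where `w` vanishes.
-/

section Exhaustion

variable {α : Type*} [LinearOrder α] [TopologicalSpace α] [OrderTopology α]
  [SecondCountableTopology α]

lemma exists_countable_subset_isCoinitialFor (s : Set α) :
    ∃ t ⊆ s, t.Countable ∧ IsCoinitialFor s t := by
  by_cases hs : ∃ m, IsLeast s m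
  · obtain ⟨m, hm, hmin⟩ := hs
    exact ⟨{m}, singleton_subset_iff.2 hm, countable_singleton m,
      fun x hx => ⟨m, rfl, hmin hx⟩⟩
  · obtain ⟨t, hts, htc, ht⟩ :=
      TopologicalSpace.isOpen_biUnion_countable s (fun x => Ioi x) fun _ _ => isOpen_Ioi
    refine ⟨t, hts, htc, fun x hx => ?_⟩
    have hlt : ∃ y ∈ s, y < x := by
      by_contra! hmin
      exact hs ⟨x, hx, hmin⟩
    have hx' : x ∈ ⋃ y ∈ t, Ioi y := ht ▸ mem_biUnion hlt.choose_spec.1 hlt.choose_spec.2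
    obtain ⟨y, hyt, hyx⟩ := mem_iUnion₂.1 hx'
    exact ⟨y, hyt, le_of_lt hyx⟩

variable [MeasurableSpace α] {μ : Measure α} {s : Set α} {C : ℝ≥0∞}

lemma measure_le_of_forall_inter_Ici_le (h : ∀ x ∈ s, μ (s ∩ Ici x) ≤ C) : μ s ≤ C := by
  obtain ⟨t, hts, htc, ht⟩ := exists_countable_subset_isCoinitialFor s
  have hcover : s ⊆ ⋃ x ∈ t, s ∩ Ici x := fun y hy => by
    obtain ⟨x, hxt, hxy⟩ := ht hy
    exact mem_biUnion hxt ⟨hy, hxy⟩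
  have hanti : Antitone fun x => s ∩ Ici x := fun _ _ hxy =>
    inter_subset_inter_right s (Ici_subset_Ici.2 hxy)
  have hdir : DirectedOn (Function.onFun (· ⊆ ·) fun x => s ∩ Ici x) t := fun x hx y hy =>
    ⟨min x y, by rcases min_choice x y with h | h <;> simpa only [h],
      hanti (min_le_left x y), hanti (min_le_right x y)⟩
  calc μ s ≤ μ (⋃ x ∈ t, s ∩ Ici x) := measure_mono hcover
    _ = ⨆ x ∈ t, μ (s ∩ Ici x) := measure_biUnion_eq_iSup htc hdir
    _ ≤ C := iSup₂_le fun x hx => h x (hts hx)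

lemma measure_le_of_forall_inter_Iic_le (h : ∀ x ∈ s, μ (s ∩ Iic x) ≤ C) : μ s ≤ C :=
  measure_le_of_forall_inter_Ici_le (α := αᵒᵈ) h

end Exhaustion

section ENNRealPowers

lemma tsum_rpow_le_rpow_tsum {ι : Type*} (a : ι → ℝ≥0∞) {s : ℝ} (hs : 1 ≤ s) :
    ∑' i, a i ^ s ≤ (∑' i, a i) ^ s := by
  have rpow_eq (x : ℝ≥0∞) : x ^ s = x * x ^ (s - 1) := by
    conv_lhs => rw [← add_sub_cancel 1 s,
      ENNReal.rpow_add_of_nonneg _ _ zero_le_one (sub_nonneg.2 hs), ENNReal.rpow_one]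
  calc ∑' i, a i ^ s = ∑' i, a i * a i ^ (s - 1) := by simp_rw [rpow_eq]
    _ ≤ ∑' i, a i * (∑' j, a j) ^ (s - 1) := by
      gcongr with i
      exact ENNReal.le_tsum i
    _ = (∑' i, a i) ^ s := by rw [ENNReal.tsum_mul_right, ← rpow_eq]

lemma mul_rpow_le_of_le_rpow_neg {p p' : ℝ} (hp : p.HolderConjugate p') {a w : ℝ≥0∞}
    (h : a ≤ w ^ (-p')) : (a * w) ^ p ≤ a := by
  rcases eq_or_ne a 0 with rfl | ha0
  · simp [hp.pos]
  rcases eq_or_ne a ∞ with rfl | ha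
  · exact le_top
  have hw : w ^ p' ≤ a⁻¹ := by
    rwa [ENNReal.rpow_neg, ENNReal.le_inv_iff_le_inv] at h
  have hwp : w ^ p ≤ a ^ (1 - p) := by
    calc w ^ p = (w ^ p') ^ (p - 1) := by
          rw [← ENNReal.rpow_mul, mul_comm, hp.sub_one_mul_conj]
      _ ≤ a⁻¹ ^ (p - 1) := by
          gcongr
          exact hp.sub_one_pos.le
      _ = a ^ (1 - p) := by rw [ENNReal.inv_rpow, ← ENNReal.rpow_neg, neg_sub]
  calc (a * w) ^ p = a ^ p * w ^ p := ENNReal.mul_rpow_of_nonneg _ _ hp.nonneg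
    _ ≤ a ^ p * a ^ (1 - p) := by gcongr
    _ = a := by rw [← ENNReal.rpow_add _ _ ha0 ha, add_sub_cancel, ENNReal.rpow_one]

lemma mul_rpow_inv_le_of_mul_le {p p' : ℝ} (hp : p.HolderConjugate p') {a b c : ℝ≥0∞}
    (hb : b ≠ ∞) (h : a * b ≤ c * b ^ p⁻¹) : a * b ^ p'⁻¹ ≤ c := by
  rcases eq_or_ne b 0 with rfl | hb0
  · simp [hp.symm.pos]
  have hsplit : b ^ p'⁻¹ * b ^ p⁻¹ = b := by
    rw [← ENNReal.rpow_add _ _ hb0 hb, add_comm, hp.inv_add_inv_eq_one, ENNReal.rpow_one]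
  refine (ENNReal.mul_le_mul_iff_left (c := b ^ p⁻¹) ?_ ?_).1 ?_
  · simp [hb0, hb]
  · exact ENNReal.rpow_ne_top_of_nonneg hp.inv_nonneg hb
  · rwa [mul_assoc, hsplit]

lemma two_zpow_add_one (k : ℤ) : (2 : ℝ≥0∞) ^ (k + 1) = 2 * 2 ^ k := by
  rw [add_comm, ENNReal.zpow_add two_ne_zero ofNat_ne_top, zpow_one]

end ENNRealPowers

section Lintegral

variable {α : Type*} [MeasurableSpace α] {μ : Measure α}

lemma exists_simpleFunc_le_lt_lintegral [SigmaFinite μ] {f : α → ℝ≥0∞} {L : ℝ≥0∞}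
    (hL : L < ∫⁻ x, f x ∂μ) :
    ∃ g : SimpleFunc α ℝ≥0, (∀ x, (g x : ℝ≥0∞) ≤ f x) ∧ ∫⁻ x, g x ∂μ < ∞ ∧
      L < ∫⁻ x, g x ∂μ := by
  rw [lintegral_eq_nnreal] at hL
  obtain ⟨φ, hL⟩ := lt_iSup_iff.1 hL
  obtain ⟨hφ, hL⟩ := lt_iSup_iff.1 hL
  rw [← SimpleFunc.lintegral_eq_lintegral] at hL
  obtain ⟨g, hg, hg_top, hLg⟩ := SimpleFunc.exists_lt_lintegral_simpleFunc_of_lt_lintegral hL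
  exact ⟨g, fun x => (ENNReal.coe_le_coe.2 (hg x)).trans (hφ x), hg_top, hLg⟩

lemma lintegral_le_lintegral_mul_weight_rpow
    {p p' : ℝ} (hp : p.HolderConjugate p') {f w : α → ℝ≥0∞} (hf : Measurable f)
    (hw : Measurable w) (hfw : ∫⁻ x, (f x * w x) ^ p ∂μ ≠ ∞)
    (hw' : ∫⁻ x, w x ^ (-p') ∂μ ≠ ∞) :
    ∫⁻ x, f x ∂μ ≤ (∫⁻ x, (f x * w x) ^ p ∂μ) ^ p⁻¹ * (∫⁻ x, w x ^ (-p') ∂μ) ^ p'⁻¹ := by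
  have hf_le : ∀ᵐ x ∂μ, f x ≤ f x * w x * (w x)⁻¹ := by
    filter_upwards [ae_lt_top (by fun_prop) hfw, ae_lt_top (by fun_prop) hw'] with x hfwx hwx
    have hw0 : w x ≠ 0 := fun h => by simp [h, hp.symm.pos] at hwx
    rcases eq_or_ne (w x) ∞ with hwt | hwt
    · have hf0 : f x = 0 := by
        by_contra hf0
        simp [hwt, ENNReal.mul_top hf0, hp.pos] at hfwx
      exact hf0 ▸ zero_le
    · rw [mul_assoc, ENNReal.mul_inv_cancel hw0 hwt, mul_one]
  calc ∫⁻ x, f x ∂μ ≤ ∫⁻ x, f x * w x * (w x)⁻¹ ∂μ := lintegral_mono_ae hf_le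
    _ ≤ (∫⁻ x, (f x * w x) ^ p ∂μ) ^ (1 / p) * (∫⁻ x, (w x)⁻¹ ^ p' ∂μ) ^ (1 / p') :=
      ENNReal.lintegral_mul_le_Lp_mul_Lq μ hp (hf.mul hw).aemeasurable hw.inv.aemeasurable
    _ = _ := by simp only [one_div, ENNReal.inv_rpow, ENNReal.rpow_neg]

section Dyadic

variable {F : α → ℝ≥0∞}

lemma lintegral_rpow_le_tsum_zpow (hF : Measurable F) (hF_top : ∀ᵐ x ∂μ, F x ≠ ∞) {q : ℝ}
    (hq : 0 < q) :
    ∫⁻ x, F x ^ q ∂μ ≤ ∑' k : ℤ, (2 ^ (k + 1)) ^ q * μ (F ⁻¹' Ioc (2 ^ k) (2 ^ (k + 1))) := by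
  let E (k : ℤ) : Set α := F ⁻¹' Ioc (2 ^ k) (2 ^ (k + 1))
  have hE (k : ℤ) : MeasurableSet (E k) := hF measurableSet_Ioc
  have hbound : ∀ᵐ x ∂μ, F x ^ q ≤ ∑' k, (E k).indicator (fun _ => (2 ^ (k + 1)) ^ q) x := by
    filter_upwards [hF_top] with x hx
    rcases eq_or_ne (F x) 0 with h0 | h0
    · simp [h0, hq]
    obtain ⟨k, hk⟩ := ENNReal.exists_mem_Ioc_zpow h0 hx one_lt_two ofNat_ne_top
    calc F x ^ q ≤ (E k).indicator (fun _ => (2 ^ (k + 1)) ^ q) x := by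
          rw [indicator_of_mem (show x ∈ E k from hk)]
          gcongr
          exact hk.2
      _ ≤ _ := ENNReal.le_tsum (f := fun k => (E k).indicator (fun _ => (2 ^ (k + 1)) ^ q) x) k
  refine (lintegral_mono_ae hbound).trans_eq ?_
  rw [lintegral_tsum fun k => (measurable_const.indicator (hE k)).aemeasurable]
  exact tsum_congr fun k => lintegral_indicator_const (hE k) _

lemma tsum_setLIntegral_preimage_Ioc_zpow_le (hF : Measurable F) (g : α → ℝ≥0∞) :
    ∑' k : ℤ, ∫⁻ x in F ⁻¹' Ioc (2 ^ k) (2 ^ (k + 2)), g x ∂μ ≤ 2 * ∫⁻ x, g x ∂μ := by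
  let I (k : ℤ) : ℝ≥0∞ := ∫⁻ x in F ⁻¹' Ioc (2 ^ k) (2 ^ (k + 1)), g x ∂μ
  have hI : ∑' k, I k ≤ ∫⁻ x, g x ∂μ := by
    have hdisj : Pairwise
        (Function.onFun Disjoint fun k : ℤ => Ioc ((2 : ℝ≥0∞) ^ k) (2 ^ (k + 1))) :=
      (ENNReal.monotone_zpow one_le_two).pairwise_disjoint_on_Ioc_succ
    rw [← lintegral_iUnion (fun k => hF measurableSet_Ioc) fun i j hij => (hdisj hij).preimage F]
    exact setLIntegral_le_lintegral _ _
  have hsplit (k : ℤ) : ∫⁻ x in F ⁻¹' Ioc (2 ^ k) (2 ^ (k + 2)), g x ∂μ ≤ I k + I (k + 1) := by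
    refine le_trans (lintegral_mono_set ?_) (lintegral_union_le _ _ _)
    rw [← preimage_union, show k + 2 = k + 1 + 1 by ring]
    exact preimage_mono Ioc_subset_Ioc_union_Ioc
  calc _ ≤ ∑' k, (I k + I (k + 1)) := ENNReal.tsum_le_tsum hsplit
    _ = ∑' k, I k + ∑' k, I (k + 1) := ENNReal.tsum_add
    _ = 2 * ∑' k, I k := by
      rw [two_mul]
      exact congrArg _ ((Equiv.addRight (1 : ℤ)).tsum_eq I)
    _ ≤ 2 * ∫⁻ x, g x ∂μ := by gcongr

end Dyadic

end Lintegral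

section HardyOperator

variable {α : Type*} [Preorder α] [MeasurableSpace α] {μ ν : Measure α}

/-- The Hardy operator of a measure: `f ↦ (x ↦ ∫_{t ≤ x} f(t) dμ(t))`. -/
noncomputable def hardyOperator (μ : Measure α) (f : α → ℝ≥0∞) (x : α) : ℝ≥0∞ :=
  ∫⁻ t in Iic x, f t ∂μ

/-- The weighted Hardy inequality `‖H f‖_{L^q(ν)} ≤ c ‖f w‖_{L^p(μ)}` for all finite nonnegative
measurable `f`, where `H` is the Hardy operator of `μ`. The left-hand weight is carried by `ν`. -/
def HardyInequality (μ ν : Measure α) (w : α → ℝ≥0∞) (p q : ℝ) (c : ℝ≥0∞) : Prop :=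
  ∀ f : α → ℝ≥0, Measurable f →
    (∫⁻ x, hardyOperator μ (fun t => f t) x ^ q ∂ν) ^ q⁻¹ ≤
      c * (∫⁻ x, (f x * w x) ^ p ∂μ) ^ p⁻¹

/-- Bradley's (Muckenhoupt-type) constant
`sup_r ν([r, ∞))^{1/q} (∫_{t ≤ r} w(t)^{-p'} dμ(t))^{1/p'}`. The rays are closed, so that its
finiteness characterizes the Hardy inequality also when the measures have atoms. -/
noncomputable def bradleyConstant (μ ν : Measure α) (w : α → ℝ≥0∞) (p' q : ℝ) : ℝ≥0∞ :=
  ⨆ r, ν (Ici r) ^ q⁻¹ * (∫⁻ x in Iic r, w x ^ (-p') ∂μ) ^ p'⁻¹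

lemma hardyOperator_mono (μ : Measure α) (f : α → ℝ≥0∞) : Monotone (hardyOperator μ f) :=
  fun _ _ hxy => lintegral_mono_set (Iic_subset_Iic.2 hxy)

lemma lintegral_hardyOperator_rpow_withDensity {f u : α → ℝ≥0∞}
    (hf : Measurable (hardyOperator μ f)) (hu : Measurable u) {q : ℝ} (hq : 0 ≤ q) :
    ∫⁻ x, hardyOperator μ f x ^ q ∂(ν.withDensity fun x => u x ^ q) =
      ∫⁻ x, (u x * hardyOperator μ f x) ^ q ∂ν := by
  rw [lintegral_withDensity_eq_lintegral_mul _ (hu.pow_const q) (hf.pow_const q)]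
  simp only [Pi.mul_apply, ENNReal.mul_rpow_of_nonneg _ _ hq]

lemma measure_Ici_rpow_mul_setLIntegral_le {f w : α → ℝ≥0∞} {p p' q : ℝ}
    (hp : p.HolderConjugate p') (hf : Measurable f) (hw : Measurable w)
    (hB : bradleyConstant μ ν w p' q ≠ ∞) (hfw : ∫⁻ x, (f x * w x) ^ p ∂μ ≠ ∞) (s : Set α) (x : α) :
    ν (Ici x) ^ q⁻¹ * ∫⁻ t in s ∩ Iic x, f t ∂μ ≤
      bradleyConstant μ ν w p' q * (∫⁻ t in s, (f t * w t) ^ p ∂μ) ^ p⁻¹ := by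
  have hle : ν (Ici x) ^ q⁻¹ * (∫⁻ t in Iic x, w t ^ (-p') ∂μ) ^ p'⁻¹ ≤
      bradleyConstant μ ν w p' q :=
    le_iSup (fun r => ν (Ici r) ^ q⁻¹ * (∫⁻ t in Iic r, w t ^ (-p') ∂μ) ^ p'⁻¹) x
  rcases eq_or_ne (ν (Ici x) ^ q⁻¹) 0 with hU | hU
  · simp [hU]
  have hV : ∫⁻ t in Iic x, w t ^ (-p') ∂μ ≠ ∞ := fun hV => hB <| top_le_iff.1 <| by
    rwa [hV, ENNReal.top_rpow_of_pos hp.symm.inv_pos, ENNReal.mul_top hU] at hle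
  have hs : ∫⁻ t in s ∩ Iic x, f t ∂μ ≤
      (∫⁻ t in s, (f t * w t) ^ p ∂μ) ^ p⁻¹ * (∫⁻ t in Iic x, w t ^ (-p') ∂μ) ^ p'⁻¹ := by
    have hN' := ne_top_of_le_ne_top hfw (setLIntegral_le_lintegral (s ∩ Iic x) _)
    have hV' := ne_top_of_le_ne_top hV (lintegral_mono_set (s.inter_subset_right (t := Iic x)))
    refine (lintegral_le_lintegral_mul_weight_rpow hp hf hw hN' hV').trans ?_
    gcongr
    · exact hp.inv_nonneg
    · exact inter_subset_left
    · exact hp.symm.inv_nonneg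
    · exact inter_subset_right
  calc _ ≤ _ := mul_le_mul_right hs _
    _ = ν (Ici x) ^ q⁻¹ * (∫⁻ t in Iic x, w t ^ (-p') ∂μ) ^ p'⁻¹ *
        (∫⁻ t in s, (f t * w t) ^ p ∂μ) ^ p⁻¹ := by ring
    _ ≤ _ := by gcongr

end HardyOperator

section Bradley

variable {α : Type*} [LinearOrder α] [TopologicalSpace α] [MeasurableSpace α] [BorelSpace α]
  {μ ν : Measure α} {f w : α → ℝ≥0∞} {p p' q : ℝ}

section Necessity

variable [OrderClosedTopology α] {c : ℝ≥0∞}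

lemma measurable_hardyOperator (μ : Measure α) (f : α → ℝ≥0∞) : Measurable (hardyOperator μ f) :=
  (hardyOperator_mono μ f).measurable

lemma measure_Ici_rpow_mul_hardyOperator_le (hq : 0 < q) (r : α) :
    ν (Ici r) ^ q⁻¹ * hardyOperator μ f r ≤ (∫⁻ x, hardyOperator μ f x ^ q ∂ν) ^ q⁻¹ := by
  have hchebyshev : hardyOperator μ f r ^ q * ν (Ici r) ≤ ∫⁻ x, hardyOperator μ f x ^ q ∂ν := by
    calc _ = ∫⁻ _ in Ici r, hardyOperator μ f r ^ q ∂ν := (setLIntegral_const _ _).symm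
      _ ≤ ∫⁻ x in Ici r, hardyOperator μ f x ^ q ∂ν :=
        setLIntegral_mono' measurableSet_Ici fun x hx => by
          gcongr
          exact hardyOperator_mono μ f hx
      _ ≤ _ := setLIntegral_le_lintegral _ _
  calc _ = (hardyOperator μ f r ^ q * ν (Ici r)) ^ q⁻¹ := by
        rw [ENNReal.mul_rpow_of_nonneg _ _ (inv_nonneg.2 hq.le), ENNReal.rpow_rpow_inv hq.ne',
          mul_comm]
    _ ≤ _ := by gcongr

lemma HardyInequality.measure_Ici_rpow_mul_setLIntegral_le (h : HardyInequality μ ν w p q c)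
    (hp : 0 < p) (hq : 0 < q) {g : α → ℝ≥0} (hg : Measurable g) (r : α) :
    ν (Ici r) ^ q⁻¹ * ∫⁻ x in Iic r, g x ∂μ ≤
      c * (∫⁻ x in Iic r, (g x * w x) ^ p ∂μ) ^ p⁻¹ := by
  let f : α → ℝ≥0 := (Iic r).indicator g
  have hf (x : α) : (f x : ℝ≥0∞) = (Iic r).indicator (fun x => (g x : ℝ≥0∞)) x := by
    by_cases hx : x ∈ Iic r <;> simp only [f, hx, indicator_of_mem, indicator_of_notMem,
      not_false_eq_true, ENNReal.coe_zero]
  have hfw (x : α) : (f x * w x) ^ p = (Iic r).indicator (fun x => (g x * w x) ^ p) x := by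
    by_cases hx : x ∈ Iic r <;> simp [hf, hx, hp]
  have hHf : hardyOperator μ (fun x => f x) r = ∫⁻ x in Iic r, g x ∂μ := by
    simp only [hardyOperator, hf, setLIntegral_indicator measurableSet_Iic, inter_self]
  calc _ = ν (Ici r) ^ q⁻¹ * hardyOperator μ (fun x => f x) r := by rw [hHf]
    _ ≤ (∫⁻ x, hardyOperator μ (fun x => f x) x ^ q ∂ν) ^ q⁻¹ :=
      measure_Ici_rpow_mul_hardyOperator_le hq r
    _ ≤ c * (∫⁻ x, (f x * w x) ^ p ∂μ) ^ p⁻¹ := h f (hg.indicator measurableSet_Iic)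
    _ = _ := by simp only [hfw, lintegral_indicator measurableSet_Iic]

lemma HardyInequality.bradleyConstant_le [SigmaFinite μ] (h : HardyInequality μ ν w p q c)
    (hp : p.HolderConjugate p') (hq : 0 < q) (hc : c ≠ ∞) :
    bradleyConstant μ ν w p' q ≤ c := by
  refine iSup_le fun r => ?_
  rcases eq_or_ne (ν (Ici r) ^ q⁻¹) 0 with hU | hU
  · simp [hU]
  have hlt (L : ℝ≥0∞) (hL : L < ∫⁻ x in Iic r, w x ^ (-p') ∂μ) :
      ν (Ici r) ^ q⁻¹ * L ^ p'⁻¹ ≤ c := by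
    obtain ⟨g, hgw, hg_top, hLg⟩ := exists_simpleFunc_le_lt_lintegral hL
    have htest := h.measure_Ici_rpow_mul_setLIntegral_le hp.pos hq g.measurable r
    calc ν (Ici r) ^ q⁻¹ * L ^ p'⁻¹ ≤ ν (Ici r) ^ q⁻¹ * (∫⁻ x in Iic r, g x ∂μ) ^ p'⁻¹ := by
          gcongr
          exact hp.symm.inv_nonneg
      _ ≤ c := mul_rpow_inv_le_of_mul_le hp hg_top.ne <| htest.trans <| by
          gcongr with x
          · exact hp.inv_nonneg
          · exact mul_rpow_le_of_le_rpow_neg hp (hgw x)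
  have hle_iff (L : ℝ≥0∞) : ν (Ici r) ^ q⁻¹ * L ^ p'⁻¹ ≤ c ↔ L ≤ (c / ν (Ici r) ^ q⁻¹) ^ p' := by
    rw [← ENNReal.rpow_inv_le_iff hp.symm.pos,
      ENNReal.le_div_iff_mul_le (Or.inl hU) (Or.inr hc), mul_comm]
  exact (hle_iff _).2 <| le_of_forall_lt_imp_le_of_dense fun L hL => (hle_iff L).1 (hlt L hL)

end Necessity

section Sufficiency

variable [OrderTopology α] [SecondCountableTopology α]

lemma setLIntegral_hardyOperator_le_le (a : ℝ≥0∞) :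
    ∫⁻ t in {t | hardyOperator μ f t ≤ a}, f t ∂μ ≤ a := by
  have hS : MeasurableSet {t | hardyOperator μ f t ≤ a} :=
    measurable_hardyOperator μ f measurableSet_Iic
  rw [← withDensity_apply _ hS]
  refine measure_le_of_forall_inter_Iic_le fun x hx => ?_
  rw [withDensity_apply _ (hS.inter measurableSet_Iic)]
  exact (lintegral_mono_set inter_subset_right).trans hx

lemma hardyOperator_le_add_setLIntegral (a : ℝ≥0∞) {b : ℝ≥0∞} {x : α}
    (hx : hardyOperator μ f x ≤ b) :
    hardyOperator μ f x ≤ a + ∫⁻ t in hardyOperator μ f ⁻¹' Ioc a b ∩ Iic x, f t ∂μ := by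
  have hcover : Iic x ⊆ {t | hardyOperator μ f t ≤ a} ∪ hardyOperator μ f ⁻¹' Ioc a b ∩ Iic x := by
    intro t ht
    rcases le_or_gt (hardyOperator μ f t) a with hta | hta
    · exact Or.inl hta
    · exact Or.inr ⟨⟨hta, (hardyOperator_mono μ f ht).trans hx⟩, ht⟩
  refine (lintegral_mono_set hcover).trans ((lintegral_union_le _ _ _).trans ?_)
  gcongr
  exact setLIntegral_hardyOperator_le_le a

section Estimates

variable (hp : p.HolderConjugate p') (hf : Measurable f) (hw : Measurable w)
  (hB : bradleyConstant μ ν w p' q ≠ ∞) (hfw : ∫⁻ x, (f x * w x) ^ p ∂μ ≠ ∞)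

include hp hf hw hB hfw

omit [BorelSpace α] in
lemma ae_hardyOperator_ne_top (hq : 0 < q) : ∀ᵐ x ∂ν, hardyOperator μ f x ≠ ∞ := by
  suffices h : ν {x | hardyOperator μ f x = ∞} ≤ 0 by
    simpa only [ae_iff, not_not] using nonpos_iff_eq_zero.1 h
  refine measure_le_of_forall_inter_Ici_le fun x hx => ?_
  have hle := measure_Ici_rpow_mul_setLIntegral_le hp hf hw hB hfw univ x
  have hlt : ν (Ici x) ^ q⁻¹ * hardyOperator μ f x ≠ ∞ := by
    simp only [univ_inter, setLIntegral_univ] at hle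
    exact ne_top_of_le_ne_top
      (ENNReal.mul_ne_top hB (ENNReal.rpow_ne_top_of_nonneg hp.inv_nonneg hfw)) hle
  have hzero : ν (Ici x) = 0 := by
    by_contra hne
    rw [hx, ENNReal.mul_top] at hlt
    · exact hlt rfl
    · simpa [ENNReal.rpow_eq_zero_iff, hq, hq.not_gt] using hne
  exact (measure_mono inter_subset_right).trans hzero.le

lemma measure_hardyOperator_Ioc_rpow_mul_le (hq : 0 < q) {a : ℝ≥0∞} (ha : a ≠ ∞) (b : ℝ≥0∞) :
    ν (hardyOperator μ f ⁻¹' Ioc (2 * a) b) ^ q⁻¹ * a ≤ bradleyConstant μ ν w p' q *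
      (∫⁻ x in hardyOperator μ f ⁻¹' Ioc a b, (f x * w x) ^ p ∂μ) ^ p⁻¹ := by
  rcases eq_or_ne a 0 with rfl | ha0
  · simp
  rw [← ENNReal.le_div_iff_mul_le (Or.inl ha0) (Or.inl ha), ENNReal.rpow_inv_le_iff hq]
  refine measure_le_of_forall_inter_Ici_le fun x hx => (measure_mono inter_subset_right).trans ?_
  rw [← ENNReal.rpow_inv_le_iff hq, ENNReal.le_div_iff_mul_le (Or.inl ha0) (Or.inl ha)]
  have ha_le : a ≤ ∫⁻ t in hardyOperator μ f ⁻¹' Ioc a b ∩ Iic x, f t ∂μ := by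
    refine (ENNReal.add_le_add_iff_left ha).1 ?_
    rw [← two_mul]
    exact hx.1.le.trans (hardyOperator_le_add_setLIntegral a hx.2)
  exact (mul_le_mul_right ha_le _).trans (measure_Ici_rpow_mul_setLIntegral_le hp hf hw hB hfw _ x)

lemma two_zpow_rpow_mul_measure_hardyOperator_Ioc_le (hq : 0 < q) (k : ℤ) :
    ((2 : ℝ≥0∞) ^ (k + 2)) ^ q * ν (hardyOperator μ f ⁻¹' Ioc (2 ^ (k + 1)) (2 ^ (k + 2))) ≤
      (4 * bradleyConstant μ ν w p' q) ^ q *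
        (∫⁻ x in hardyOperator μ f ⁻¹' Ioc (2 ^ k) (2 ^ (k + 2)), (f x * w x) ^ p ∂μ) ^
          (q / p) := by
  have hlevel := measure_hardyOperator_Ioc_rpow_mul_le hp hf hw hB hfw hq
    (ENNReal.zpow_ne_top two_ne_zero ofNat_ne_top k) (2 ^ (k + 2))
  rw [← two_zpow_add_one] at hlevel
  have hfour : (2 : ℝ≥0∞) ^ (k + 2) = 4 * 2 ^ k := by
    rw [show k + 2 = k + 1 + 1 by ring, two_zpow_add_one, two_zpow_add_one, ← mul_assoc]
    norm_num
  set E := hardyOperator μ f ⁻¹' Ioc (2 ^ (k + 1)) (2 ^ (k + 2))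
  set D := hardyOperator μ f ⁻¹' Ioc (2 ^ k) (2 ^ (k + 2))
  calc ((2 : ℝ≥0∞) ^ (k + 2)) ^ q * ν E = (4 * (ν E ^ q⁻¹ * 2 ^ k)) ^ q := by
        rw [mul_left_comm, ← hfour, ENNReal.mul_rpow_of_nonneg _ _ hq.le,
          ENNReal.rpow_inv_rpow hq.ne', mul_comm]
    _ ≤ (4 * (bradleyConstant μ ν w p' q * (∫⁻ x in D, (f x * w x) ^ p ∂μ) ^ p⁻¹)) ^ q := by
        gcongr
    _ = _ := by
        rw [← mul_assoc, ENNReal.mul_rpow_of_nonneg _ _ hq.le, ← ENNReal.rpow_mul,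
          inv_mul_eq_div]

lemma lintegral_hardyOperator_rpow_le (hpq : p ≤ q) :
    ∫⁻ x, hardyOperator μ f x ^ q ∂ν ≤
      (4 * bradleyConstant μ ν w p' q) ^ q * (2 * ∫⁻ x, (f x * w x) ^ p ∂μ) ^ (q / p) := by
  have hq : 0 < q := hp.pos.trans_le hpq
  have hF := measurable_hardyOperator μ f
  let N (k : ℤ) : ℝ≥0∞ :=
    ∫⁻ x in hardyOperator μ f ⁻¹' Ioc (2 ^ k) (2 ^ (k + 2)), (f x * w x) ^ p ∂μ
  calc ∫⁻ x, hardyOperator μ f x ^ q ∂ν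
      ≤ ∑' k : ℤ, (2 ^ (k + 1)) ^ q * ν (hardyOperator μ f ⁻¹' Ioc (2 ^ k) (2 ^ (k + 1))) :=
        lintegral_rpow_le_tsum_zpow hF (ae_hardyOperator_ne_top hp hf hw hB hfw hq) hq
    _ = ∑' k : ℤ, (2 ^ (k + 2)) ^ q *
          ν (hardyOperator μ f ⁻¹' Ioc (2 ^ (k + 1)) (2 ^ (k + 2))) := by
        rw [← (Equiv.addRight (1 : ℤ)).tsum_eq]
        simp only [Equiv.coe_addRight, add_assoc, one_add_one_eq_two]
    _ ≤ ∑' k, (4 * bradleyConstant μ ν w p' q) ^ q * N k ^ (q / p) :=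
        ENNReal.tsum_le_tsum (two_zpow_rpow_mul_measure_hardyOperator_Ioc_le hp hf hw hB hfw hq)
    _ = (4 * bradleyConstant μ ν w p' q) ^ q * ∑' k, N k ^ (q / p) := ENNReal.tsum_mul_left
    _ ≤ (4 * bradleyConstant μ ν w p' q) ^ q * (∑' k, N k) ^ (q / p) := by
        gcongr
        exact tsum_rpow_le_rpow_tsum N ((one_le_div hp.pos).2 hpq)
    _ ≤ _ := by
        gcongr
        · exact div_nonneg hq.le hp.nonneg
        · exact tsum_setLIntegral_preimage_Ioc_zpow_le hF _

lemma lintegral_hardyOperator_rpow_rpow_inv_le (hpq : p ≤ q) :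
    (∫⁻ x, hardyOperator μ f x ^ q ∂ν) ^ q⁻¹ ≤
      8 * bradleyConstant μ ν w p' q * (∫⁻ x, (f x * w x) ^ p ∂μ) ^ p⁻¹ := by
  have hq : 0 < q := hp.pos.trans_le hpq
  have htwo : (2 : ℝ≥0∞) ^ p⁻¹ ≤ 2 :=
    (ENNReal.rpow_le_rpow_of_exponent_le one_le_two (inv_le_one_of_one_le₀ hp.lt.le)).trans_eq
      (ENNReal.rpow_one 2)
  rw [ENNReal.rpow_inv_le_iff hq]
  refine (lintegral_hardyOperator_rpow_le hp hf hw hB hfw hpq).trans ?_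
  calc _ = (4 * bradleyConstant μ ν w p' q * (2 * ∫⁻ x, (f x * w x) ^ p ∂μ) ^ p⁻¹) ^ q := by
        rw [ENNReal.mul_rpow_of_nonneg _ (_ ^ p⁻¹) hq.le, ← ENNReal.rpow_mul, inv_mul_eq_div]
    _ ≤ (4 * bradleyConstant μ ν w p' q * (2 * (∫⁻ x, (f x * w x) ^ p ∂μ) ^ p⁻¹)) ^ q := by
        rw [ENNReal.mul_rpow_of_nonneg _ _ hp.inv_nonneg]
        gcongr
    _ = _ := by ring_nf

end Estimates

theorem stmt_6_general [SigmaFinite μ] (hp : p.HolderConjugate p') (hpq : p ≤ q)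
    (hw : Measurable w) :
    (∃ c : ℝ, 0 < c ∧ HardyInequality μ ν w p q (ENNReal.ofReal c)) ↔
      bradleyConstant μ ν w p' q < ∞ := by
  constructor
  · rintro ⟨c, -, h⟩
    exact (h.bradleyConstant_le hp (hp.pos.trans_le hpq) ofReal_ne_top).trans_lt ofReal_lt_top
  · intro hB
    have hc : 8 * bradleyConstant μ ν w p' q ≤
        ENNReal.ofReal (8 * (bradleyConstant μ ν w p' q).toReal + 1) := by
      rw [← ENNReal.ofReal_toReal (ENNReal.mul_ne_top ofNat_ne_top hB.ne)]
      exact ENNReal.ofReal_le_ofReal (by simp)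
    have hc_pos : 0 < 8 * (bradleyConstant μ ν w p' q).toReal + 1 := by positivity
    refine ⟨_, hc_pos, fun f hf => ?_⟩
    by_cases hfw : ∫⁻ x, (f x * w x) ^ p ∂μ = ∞
    · simp [hfw, hp.pos, ENNReal.mul_top, hc_pos]
    · exact (lintegral_hardyOperator_rpow_rpow_inv_le hp hf.coe_nnreal_ennreal hw hB.ne hfw
        hpq).trans (by gcongr)

end Sufficiency

end Bradley

section HalfLine

variable {p q : ℝ} {u : ℝ → ℝ≥0∞}

lemma hardyOperator_restrict_Ioi (f : ℝ → ℝ≥0∞) (x : ℝ) :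
    hardyOperator (volume.restrict (Ioi 0)) f x = ∫⁻ t in Ioc 0 x, f t := by
  rw [hardyOperator, Measure.restrict_restrict measurableSet_Iic, Iic_inter_Ioi]

lemma hardyInequality_restrict_Ioi_iff (hu : Measurable u) (w : ℝ → ℝ≥0∞) (hq : 0 ≤ q)
    (c : ℝ≥0∞) :
    HardyInequality (volume.restrict (Ioi 0)) ((volume.restrict (Ioi 0)).withDensity (u · ^ q))
        w p q c ↔
      ∀ f : ℝ → ℝ, Measurable f → (∀ x ∈ Ioi (0 : ℝ), 0 ≤ f x) →
        (∫⁻ x in Ioi (0 : ℝ), (u x * ∫⁻ t in Ioc (0 : ℝ) x, ENNReal.ofReal (f t)) ^ q) ^ (1 / q) ≤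
          c * (∫⁻ x in Ioi (0 : ℝ), (ENNReal.ofReal (f x) * w x) ^ p) ^ (1 / p) := by
  simp only [HardyInequality, one_div,
    lintegral_hardyOperator_rpow_withDensity (measurable_hardyOperator _ _) hu hq]
  simp only [hardyOperator_restrict_Ioi]
  constructor
  · exact fun h f hf _ => h (fun x => (f x).toNNReal) hf.real_toNNReal
  · intro h f hf
    simpa only [ofReal_coe_nnreal] using
      h (fun x => f x) hf.coe_nnreal_real fun x _ => (f x).coe_nonneg

lemma bradleyConstant_restrict_Ioi (w : ℝ → ℝ≥0∞) {p' : ℝ} (hp' : 0 < p') :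
    bradleyConstant (volume.restrict (Ioi 0)) ((volume.restrict (Ioi 0)).withDensity (u · ^ q))
        w p' q =
      ⨆ r ∈ Ioi (0 : ℝ),
        (∫⁻ x in Ioi r, u x ^ q) ^ q⁻¹ * (∫⁻ x in Ioc (0 : ℝ) r, w x ^ (-p')) ^ p'⁻¹ := by
  refine iSup_congr fun r => ?_
  rw [withDensity_apply _ measurableSet_Ici, Measure.restrict_restrict measurableSet_Ici,
    Measure.restrict_restrict measurableSet_Iic, Iic_inter_Ioi]
  rcases lt_or_ge 0 r with hr | hr
  · have hIci : Ici r ∩ Ioi 0 = Ici r := inter_eq_left.2 (Ici_subset_Ioi.2 hr)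
    rw [iSup_pos (mem_Ioi.2 hr), hIci, setLIntegral_congr Ioi_ae_eq_Ici]
  · simp [hr.not_gt, Ioc_eq_empty, hp']

end HalfLine

/-- Bradley's weighted Hardy inequality with mixed norms: for `1 < p ≤ q < ∞`
the inequality
`(∫₀^∞ [u(x) ∫₀^x f]^q)^{1/q} ≤ c (∫₀^∞ [f v]^p)^{1/p}`
holds for all nonnegative measurable `f` iff
`sup_{r>0} (∫_r^∞ u^q)^{1/q} (∫₀^r v^{-p'})^{1/p'} < ∞`. -/
theorem stmt_6 (p q : ℝ) (hp : 1 < p) (hpq : p ≤ q)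
    (u v : ℝ → ℝ) (hu : Measurable u) (hv : Measurable v)
    (hu0 : ∀ x ∈ Ioi (0 : ℝ), 0 ≤ u x) (hv0 : ∀ x ∈ Ioi (0 : ℝ), 0 ≤ v x) :
    (∃ c : ℝ, 0 < c ∧ ∀ f : ℝ → ℝ, Measurable f → (∀ x ∈ Ioi (0 : ℝ), 0 ≤ f x) →
      (∫⁻ x in Ioi (0 : ℝ),
          (ENNReal.ofReal (u x) * ∫⁻ t in Ioc (0 : ℝ) x, ENNReal.ofReal (f t)) ^ q) ^ (1 / q) ≤
        ENNReal.ofReal c *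
          (∫⁻ x in Ioi (0 : ℝ), (ENNReal.ofReal (f x) * ENNReal.ofReal (v x)) ^ p) ^ (1 / p)) ↔
    (⨆ r ∈ Ioi (0 : ℝ),
      (∫⁻ x in Ioi r, ENNReal.ofReal (u x) ^ q) ^ (1 / q) *
        (∫⁻ x in Ioc (0 : ℝ) r, ENNReal.ofReal (v x) ^ (-(p / (p - 1)))) ^ ((p - 1) / p)) < ∞ := by
  have hconj : p.HolderConjugate (p / (p - 1)) := .conjExponent hp
  have h := stmt_6_general (μ := volume.restrict (Ioi 0))
    (ν := (volume.restrict (Ioi 0)).withDensity fun x => ENNReal.ofReal (u x) ^ q)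
    hconj hpq hv.ennreal_ofReal
  simpa only [hardyInequality_restrict_Ioi_iff hu.ennreal_ofReal _ (hconj.nonneg.trans hpq),
    bradleyConstant_restrict_Ioi _ hconj.symm.pos, one_div, inv_div] using h
end

section
/- Let n ≥ 2, 1 < p < n, and 1 ≤ q ≤ ∞. Then there exists a constant c = c(n,p,q) > 0 such that for every smooth compactly supported f : ℝⁿ → ℝ, ‖f‖_{np/(n-p), q} ≤ c ‖ |∇f| ‖_{p,q}. -/
open MeasureTheory Set ENNReal

/-- The distribution function `μ_f(λ) = μ{x : |f x| > λ}` of a function. -/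
noncomputable def distribFn {α : Type*} [MeasurableSpace α] (μ : Measure α)
    (f : α → ℝ) (l : ℝ≥0∞) : ℝ≥0∞ :=
  μ {x | l < ENNReal.ofReal |f x|}

/-- The decreasing rearrangement `f*(t) = inf {λ > 0 : μ_f(λ) ≤ t}`. -/
noncomputable def rearr {α : Type*} [MeasurableSpace α] (μ : Measure α)
    (f : α → ℝ) (t : ℝ) : ℝ≥0∞ :=
  sInf {l : ℝ≥0∞ | 0 < l ∧ distribFn μ f l ≤ ENNReal.ofReal t}

/-- The Lorentz `L^{p,q}` (quasi)norm
`‖f‖_{p,q} = (∫₀^∞ (t^{1/p} f*(t))^q dt/t)^{1/q}` for `q < ∞`, and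
`‖f‖_{p,∞} = sup_{t>0} t^{1/p} f*(t)`. -/
noncomputable def lorentz {α : Type*} [MeasurableSpace α] (μ : Measure α)
    (p q : ℝ≥0∞) (f : α → ℝ) : ℝ≥0∞ :=
  if q = ∞ then ⨆ t ∈ Ioi (0 : ℝ), ENNReal.ofReal t ^ p.toReal⁻¹ * rearr μ f t
  else (∫⁻ t in Ioi (0 : ℝ),
      (ENNReal.ofReal t ^ p.toReal⁻¹ * rearr μ f t) ^ q.toReal / ENNReal.ofReal t) ^ q.toReal⁻¹

/-!
Cutting `f` off smoothly between the levels `f*(2t)` and `f*(t)` and applying the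
Gagliardo–Nirenberg–Sobolev inequality for `p = 1` to the truncation gives
`f*(t) - f*(2t) ≤ C t^{1/n} |∇f|**(t)`, where `g**(t) = t⁻¹ ∫₀ᵗ g*`. Telescoping along `2ᵏt` then
bounds `t^{1/p - 1/n} f*(t)` by a sum over `k` of `2^{-k(1/p - 1/n)}` times the dilate by `2ᵏ` of
`t^{1/p} |∇f|**(t)`, and this function is itself an average over `0 < s < 1`, with weight
`s^{-1/p}`, of dilates of `t^{1/p} |∇f|*(t)`. The norm of `L^q(dt/t)` is invariant under dilations
and satisfies Minkowski's inequality, so it only remains that the weights have finite mass: the sum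
converges because `p < n`, the integral because `1 < p`.
-/

section Rearrangement

variable {α : Type*} [MeasurableSpace α] {μ : Measure α} {f : α → ℝ}

theorem distribFn_rearr_le (μ : Measure α) (f : α → ℝ) (t : ℝ) :
    distribFn μ f (rearr μ f t) ≤ ENNReal.ofReal t := by
  have h_nonempty : {l : ℝ≥0∞ | 0 < l ∧ distribFn μ f l ≤ ENNReal.ofReal t}.Nonempty :=
    ⟨∞, by simp [distribFn]⟩
  obtain ⟨l, hl_anti, hl_tendsto, hl_mem⟩ :=
    exists_seq_tendsto_sInf h_nonempty (OrderBot.bddBelow _)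
  have h_subset : {x | rearr μ f t < ENNReal.ofReal |f x|} ⊆
      ⋃ k, {x | l k < ENNReal.ofReal |f x|} := fun x hx =>
    mem_iUnion.2 (hl_tendsto.eventually (gt_mem_nhds hx)).exists
  have h_mono : Monotone fun k => {x | l k < ENNReal.ofReal |f x|} :=
    fun _ _ hij _ hx => (hl_anti hij).trans_lt hx
  calc distribFn μ f (rearr μ f t) ≤ μ (⋃ k, {x | l k < ENNReal.ofReal |f x|}) :=
        measure_mono h_subset
    _ = ⨆ k, distribFn μ f (l k) := h_mono.measure_iUnion
    _ ≤ ENNReal.ofReal t := iSup_le fun k => (hl_mem k).2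

theorem distribFn_antitone (μ : Measure α) (f : α → ℝ) : Antitone (distribFn μ f) :=
  fun _ _ hl => measure_mono fun _ hx => lt_of_le_of_lt hl hx

theorem distribFn_ofReal (μ : Measure α) (f : α → ℝ) {l : ℝ} (hl : 0 ≤ l) :
    distribFn μ f (ENNReal.ofReal l) = μ {x | l < |f x|} := by
  simp only [distribFn, ENNReal.ofReal_lt_ofReal_iff_of_nonneg hl]

theorem rearr_le_iff {t : ℝ} {l : ℝ≥0∞} :
    rearr μ f t ≤ l ↔ distribFn μ f l ≤ ENNReal.ofReal t := by
  refine ⟨fun h => (distribFn_antitone μ f h).trans (distribFn_rearr_le μ f t), fun h => ?_⟩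
  refine le_of_forall_gt_imp_ge_of_dense fun m hm => sInf_le ⟨zero_le.trans_lt hm, ?_⟩
  exact (distribFn_antitone μ f hm.le).trans h

theorem lt_rearr_iff {t : ℝ} {l : ℝ≥0∞} :
    l < rearr μ f t ↔ ENNReal.ofReal t < distribFn μ f l := by
  simpa only [not_le] using rearr_le_iff.not

theorem rearr_antitone (μ : Measure α) (f : α → ℝ) : Antitone (rearr μ f) := fun s _ hst =>
  rearr_le_iff.2 ((distribFn_rearr_le μ f s).trans (ENNReal.ofReal_le_ofReal hst))

theorem rearr_eq_zero_of_measure_support_le {t : ℝ}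
    (h : μ (Function.support f) ≤ ENNReal.ofReal t) : rearr μ f t = 0 := by
  refine nonpos_iff_eq_zero.1 (rearr_le_iff.2 ?_)
  simpa [distribFn, Function.support] using h

theorem rearr_le_tsum_of_le_rearr_two_mul_add (hf : μ (Function.support f) ≠ ∞) {B : ℝ → ℝ≥0∞}
    (hB : ∀ t, 0 < t → rearr μ f t ≤ rearr μ f (2 * t) + B t) {t : ℝ} (ht : 0 < t) :
    rearr μ f t ≤ ∑' k : ℕ, B (2 ^ k * t) := by
  have h_partial (N : ℕ) :
      rearr μ f t ≤ rearr μ f (2 ^ N * t) + ∑ k ∈ Finset.range N, B (2 ^ k * t) := by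
    induction N with
    | zero => simp
    | succ N ih =>
      calc rearr μ f t ≤ rearr μ f (2 ^ N * t) + ∑ k ∈ Finset.range N, B (2 ^ k * t) := ih
        _ ≤ rearr μ f (2 * (2 ^ N * t)) + B (2 ^ N * t) +
            ∑ k ∈ Finset.range N, B (2 ^ k * t) := by gcongr; exact hB _ (by positivity)
        _ = rearr μ f (2 ^ (N + 1) * t) + ∑ k ∈ Finset.range (N + 1), B (2 ^ k * t) := by
          rw [Finset.sum_range_succ, pow_succ', mul_assoc, add_assoc, add_comm (B _)]
  obtain ⟨N, hN⟩ := pow_unbounded_of_one_lt ((μ (Function.support f)).toReal / t) one_lt_two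
  have h_zero : rearr μ f (2 ^ N * t) = 0 := rearr_eq_zero_of_measure_support_le
    ((ENNReal.le_ofReal_iff_toReal_le hf (by positivity)).2 ((div_lt_iff₀ ht).1 hN).le)
  calc rearr μ f t ≤ ∑ k ∈ Finset.range N, B (2 ^ k * t) := by
        simpa only [h_zero, zero_add] using h_partial N
    _ ≤ ∑' k : ℕ, B (2 ^ k * t) := ENNReal.sum_le_tsum _

end Rearrangement

section AveragedRearrangement

variable {α : Type*} [MeasurableSpace α] {μ : Measure α} {f : α → ℝ}

/-- The averaged rearrangement `f**(t) = t⁻¹ ∫₀ᵗ f*(s) ds` (for `t > 0`), written as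
`∫₀¹ f*(s t) ds` so that it is an average of dilates of `f*`. -/
noncomputable def avgRearr (μ : Measure α) (f : α → ℝ) (t : ℝ) : ℝ≥0∞ :=
  ∫⁻ s in Ioo (0 : ℝ) 1, rearr μ f (s * t)

theorem avgRearr_antitone (μ : Measure α) (f : α → ℝ) : Antitone (avgRearr μ f) :=
  fun _ _ ht => setLIntegral_mono' measurableSet_Ioo fun _ hs =>
    rearr_antitone μ f (mul_le_mul_of_nonneg_left ht hs.1.le)

theorem lintegral_meas_ofReal_lt_le {G : α → ℝ≥0∞} (hG : AEMeasurable G μ) :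
    ∫⁻ l in Ioi (0 : ℝ), μ {x | ENNReal.ofReal l < G x} ≤ ∫⁻ x, G x ∂μ := by
  by_cases h_top : ∫⁻ x, G x ∂μ = ∞
  · simp [h_top]
  have h_finite : ∀ᵐ x ∂μ, G x < ∞ := ae_lt_top' hG h_top
  calc ∫⁻ l in Ioi (0 : ℝ), μ {x | ENNReal.ofReal l < G x}
      = ∫⁻ l in Ioi (0 : ℝ), μ {x | l < (G x).toReal} := by
        refine setLIntegral_congr_fun measurableSet_Ioi fun l hl => measure_congr ?_
        filter_upwards [h_finite] with x hx
        exact propext (ENNReal.ofReal_lt_iff_lt_toReal (le_of_lt hl) hx.ne)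
    _ = ∫⁻ x, ENNReal.ofReal (G x).toReal ∂μ :=
        (lintegral_eq_lintegral_meas_lt μ (.of_forall fun _ => ENNReal.toReal_nonneg)
          hG.ennreal_toReal).symm
    _ ≤ ∫⁻ x, G x ∂μ := lintegral_mono fun _ => ENNReal.ofReal_toReal_le

theorem min_le_mul_volume_ofReal_mul_lt {T : ℝ} (hT : 0 < T) (D : ℝ≥0∞) :
    min (ENNReal.ofReal T) D ≤
      ENNReal.ofReal T * volume.restrict (Ioo 0 1) {s : ℝ | ENNReal.ofReal (s * T) < D} := by
  set m := min (ENNReal.ofReal T) D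
  have hm : ENNReal.ofReal m.toReal = m :=
    ENNReal.ofReal_toReal (ne_top_of_le_ne_top ENNReal.ofReal_ne_top (min_le_left _ _))
  have hmT : m.toReal ≤ T := ENNReal.toReal_le_of_le_ofReal hT.le (min_le_left _ _)
  have h_subset : Ioo 0 (m.toReal / T) ⊆ {s | ENNReal.ofReal (s * T) < D} ∩ Ioo 0 1 := by
    rintro s ⟨hs₀, hs⟩
    refine ⟨?_, hs₀, hs.trans_le ((div_le_one hT).2 hmT)⟩
    have hsT : s * T < m.toReal := (lt_div_iff₀ hT).1 hs
    calc ENNReal.ofReal (s * T) < ENNReal.ofReal m.toReal :=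
          (ENNReal.ofReal_lt_ofReal_iff_of_nonneg (by positivity)).2 hsT
      _ = m := hm
      _ ≤ D := min_le_right _ _
  calc m = ENNReal.ofReal T * volume (Ioo 0 (m.toReal / T)) := by
        rw [Real.volume_Ioo, sub_zero, ← ENNReal.ofReal_mul hT.le, mul_div_cancel₀ _ hT.ne', hm]
    _ ≤ _ := mul_le_mul_right ((measure_mono h_subset).trans (Measure.le_restrict_apply _ _)) _

theorem setLIntegral_ofReal_abs_le_mul_avgRearr (hf : AEMeasurable f μ) {A : Set α} {T : ℝ}
    (hT : 0 < T) (hA : μ A ≤ ENNReal.ofReal T) :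
    ∫⁻ x in A, ENNReal.ofReal |f x| ∂μ ≤ ENNReal.ofReal T * avgRearr μ f T := by
  have h_level (l : ℝ) (hl : 0 < l) : μ.restrict A {x | l < |f x|} ≤ ENNReal.ofReal T *
      volume.restrict (Ioo 0 1) {s : ℝ | ENNReal.ofReal l < rearr μ f (s * T)} := by
    simp only [lt_rearr_iff]
    refine le_trans (le_min ?_ ?_) (min_le_mul_volume_ofReal_mul_lt hT _)
    · calc μ.restrict A {x | l < |f x|} ≤ μ.restrict A univ := measure_mono (subset_univ _)
        _ = μ A := Measure.restrict_apply_univ A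
        _ ≤ ENNReal.ofReal T := hA
    · exact (Measure.restrict_apply_le _ _).trans_eq (distribFn_ofReal μ f hl.le).symm
  have h_meas : Measurable fun s => rearr μ f (s * T) :=
    (rearr_antitone μ f).measurable.comp (measurable_mul_const T)
  calc ∫⁻ x in A, ENNReal.ofReal |f x| ∂μ
      = ∫⁻ l in Ioi (0 : ℝ), μ.restrict A {x | l < |f x|} :=
        lintegral_eq_lintegral_meas_lt _ (.of_forall fun _ => abs_nonneg _) hf.abs.restrict
    _ ≤ ENNReal.ofReal T * ∫⁻ l in Ioi (0 : ℝ),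
          volume.restrict (Ioo 0 1) {s : ℝ | ENNReal.ofReal l < rearr μ f (s * T)} := by
        rw [← lintegral_const_mul' _ _ ENNReal.ofReal_ne_top]
        exact setLIntegral_mono' measurableSet_Ioi h_level
    _ ≤ ENNReal.ofReal T * avgRearr μ f T := by
        gcongr
        exact lintegral_meas_ofReal_lt_le h_meas.aemeasurable

end AveragedRearrangement

section HaarLpNorm

/-- The `L^q` norm on `(0, ∞)` with respect to the dilation-invariant measure `dt/t`, with a genuine
supremum in place of the essential one for `q = ∞`; `lorentz μ p q f` is this norm of
`t ↦ t^{1/p} f*(t)`. -/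
noncomputable def haarLpNorm (q : ℝ≥0∞) (G : ℝ → ℝ≥0∞) : ℝ≥0∞ :=
  if q = ∞ then ⨆ t ∈ Ioi (0 : ℝ), G t
  else (∫⁻ t in Ioi (0 : ℝ), G t ^ q.toReal / ENNReal.ofReal t) ^ q.toReal⁻¹

variable {q : ℝ≥0∞} {F G : ℝ → ℝ≥0∞}

theorem lorentz_eq_haarLpNorm {α : Type*} [MeasurableSpace α] (μ : Measure α) (p q : ℝ≥0∞)
    (f : α → ℝ) :
    lorentz μ p q f = haarLpNorm q fun t => ENNReal.ofReal t ^ p.toReal⁻¹ * rearr μ f t :=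
  rfl

theorem haarLpNorm_mono (h : ∀ t, 0 < t → F t ≤ G t) : haarLpNorm q F ≤ haarLpNorm q G := by
  unfold haarLpNorm
  split_ifs
  · exact iSup₂_mono h
  · gcongr ?_ ^ _
    refine setLIntegral_mono' measurableSet_Ioi fun t ht => ?_
    gcongr
    exact h t ht

theorem setLIntegral_Ioi_comp_mul_left_div (H : ℝ → ℝ≥0∞) {c : ℝ} (hc : 0 < c) :
    ∫⁻ t in Ioi (0 : ℝ), H (c * t) / ENNReal.ofReal t =
      ∫⁻ t in Ioi (0 : ℝ), H t / ENNReal.ofReal t := by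
  have h_deriv : ∀ t ∈ Ioi (0 : ℝ), HasDerivWithinAt (c * ·) c (Ioi 0) t := fun t _ => by
    simpa using ((hasDerivAt_id t).const_mul c).hasDerivWithinAt
  conv_rhs => rw [← image_const_mul_Ioi_zero hc, lintegral_image_eq_lintegral_abs_deriv_mul
    measurableSet_Ioi h_deriv (mul_right_injective₀ hc.ne').injOn]
  refine setLIntegral_congr_fun measurableSet_Ioi fun t _ => ?_
  have hc₀ : ENNReal.ofReal c ≠ 0 := by simpa using hc
  rw [abs_of_pos hc, ENNReal.ofReal_mul hc.le, ← mul_div_assoc,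
    ENNReal.mul_div_mul_left _ _ hc₀ ENNReal.ofReal_ne_top]

theorem lintegral_mul_rpow_le {ι : Type*} [MeasurableSpace ι] (ν : Measure ι) {w z : ι → ℝ≥0∞}
    (hw : AEMeasurable w ν) (hz : AEMeasurable z ν) {r : ℝ} (hr : 1 ≤ r) :
    (∫⁻ i, w i * z i ∂ν) ^ r ≤ (∫⁻ i, w i ∂ν) ^ (r - 1) * ∫⁻ i, w i * z i ^ r ∂ν := by
  have hr₀ : 0 < r := one_pos.trans_le hr
  have h_density {y : ι → ℝ≥0∞} (hy : AEMeasurable y ν) :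
      ∫⁻ i, y i ∂ν.withDensity w = ∫⁻ i, w i * y i ∂ν :=
    lintegral_withDensity_eq_lintegral_mul₀ hw hy
  have h_holder := ENNReal.rpow_le_rpow (eLpNorm'_le_eLpNorm'_mul_rpow_measure_univ one_pos hr
    (hz.mono_ac (withDensity_absolutelyContinuous ν w)).aestronglyMeasurable) hr₀.le
  have h_exponent : (1 - r⁻¹) * r = r - 1 := by field_simp
  simp only [eLpNorm', enorm_eq_self, ENNReal.rpow_one, one_div, inv_one] at h_holder
  rw [ENNReal.mul_rpow_of_nonneg _ _ hr₀.le, ENNReal.rpow_inv_rpow hr₀.ne', ← ENNReal.rpow_mul,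
    h_exponent, h_density hz, h_density (hz.pow_const r), withDensity_apply _ .univ,
    setLIntegral_univ, mul_comm (lintegral _ _)] at h_holder
  exact h_holder

theorem haarLpNorm_lintegral_dilation_le {ι : Type*} [MeasurableSpace ι] {ν : Measure ι}
    [SFinite ν] {w : ι → ℝ≥0∞} (hw : Measurable w) {c : ι → ℝ} (hc : Measurable c)
    (hc_pos : ∀ᵐ i ∂ν, 0 < c i) (hG : Measurable G) (hq : 1 ≤ q) :
    haarLpNorm q (fun t => ∫⁻ i, w i * G (c i * t) ∂ν) ≤ (∫⁻ i, w i ∂ν) * haarLpNorm q G := by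
  unfold haarLpNorm
  split_ifs with hq_top
  · refine iSup₂_le fun t ht => ?_
    rw [← lintegral_mul_const _ hw]
    refine lintegral_mono_ae ?_
    filter_upwards [hc_pos] with i hi
    gcongr
    exact le_iSup₂_of_le (c i * t) (mul_pos hi ht) le_rfl
  set r := q.toReal
  set W := ∫⁻ i, w i ∂ν
  have hr : 1 ≤ r := by simpa using ENNReal.toReal_mono hq_top hq
  have hr₀ : 0 < r := one_pos.trans_le hr
  rw [ENNReal.rpow_inv_le_iff hr₀, ENNReal.mul_rpow_of_nonneg _ _ hr₀.le,
    ENNReal.rpow_inv_rpow hr₀.ne']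
  calc ∫⁻ t in Ioi (0 : ℝ), (∫⁻ i, w i * G (c i * t) ∂ν) ^ r / ENNReal.ofReal t
      ≤ ∫⁻ t in Ioi (0 : ℝ), W ^ (r - 1) *
          ∫⁻ i, w i * (G (c i * t) ^ r / ENNReal.ofReal t) ∂ν := by
        refine setLIntegral_mono' measurableSet_Ioi fun t _ => ?_
        simp only [div_eq_mul_inv, ← mul_assoc (w _)]
        rw [lintegral_mul_const _ (by fun_prop), ← mul_assoc]
        gcongr
        exact lintegral_mul_rpow_le ν hw.aemeasurable (by fun_prop) hr
    _ = W ^ (r - 1) * ∫⁻ i, (∫⁻ t in Ioi (0 : ℝ),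
          w i * (G (c i * t) ^ r / ENNReal.ofReal t)) ∂ν := by
        rw [lintegral_const_mul _ (by fun_prop), lintegral_lintegral_swap (by fun_prop)]
    _ = W ^ (r - 1) * ∫⁻ i, w i * (∫⁻ t in Ioi (0 : ℝ), G t ^ r / ENNReal.ofReal t) ∂ν := by
        congr 1
        refine lintegral_congr_ae ?_
        filter_upwards [hc_pos] with i hi
        rw [lintegral_const_mul _ (by fun_prop),
          setLIntegral_Ioi_comp_mul_left_div (fun t => G t ^ r) hi]
    _ = W ^ r * ∫⁻ t in Ioi (0 : ℝ), G t ^ r / ENNReal.ofReal t := by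
        have hW : W ^ (r - 1) * W = W ^ r := by
          simpa using (ENNReal.rpow_add_of_nonneg (x := W) _ _ (sub_nonneg.2 hr) zero_le_one).symm
        rw [lintegral_mul_const _ hw, ← mul_assoc, hW]

theorem haarLpNorm_tsum_dilation_le {ι : Type*} [Countable ι] (w : ι → ℝ≥0∞) {c : ι → ℝ}
    (hc : ∀ i, 0 < c i) (hG : Measurable G) (hq : 1 ≤ q) :
    haarLpNorm q (fun t => ∑' i, w i * G (c i * t)) ≤ (∑' i, w i) * haarLpNorm q G := by
  let _ : MeasurableSpace ι := ⊤
  have _ : MeasurableSingletonClass ι := ⟨fun _ => trivial⟩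
  simpa only [lintegral_count] using haarLpNorm_lintegral_dilation_le (ν := .count)
    (measurable_from_top (f := w)) (measurable_from_top (f := c)) (.of_forall hc) hG hq

theorem ofReal_rpow_eq_mul_ofReal_mul_rpow {s : ℝ} (hs : 0 < s) (t a : ℝ) :
    ENNReal.ofReal t ^ a = ENNReal.ofReal s ^ (-a) * ENNReal.ofReal (s * t) ^ a := by
  rw [ENNReal.ofReal_mul hs.le, ENNReal.mul_rpow_of_ne_top (by simp) (by simp), ← mul_assoc,
    ← ENNReal.rpow_add _ _ (by simpa using hs) (by simp), neg_add_cancel, ENNReal.rpow_zero,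
    one_mul]

theorem haarLpNorm_rpow_mul_avgRearr_le {α : Type*} [MeasurableSpace α] (μ : Measure α) (f : α → ℝ)
    (a : ℝ) (hq : 1 ≤ q) :
    haarLpNorm q (fun t => ENNReal.ofReal t ^ a * avgRearr μ f t) ≤
      (∫⁻ s in Ioo (0 : ℝ) 1, ENNReal.ofReal s ^ (-a)) *
        haarLpNorm q fun t => ENNReal.ofReal t ^ a * rearr μ f t := by
  have h_rearr : Measurable (rearr μ f) := (rearr_antitone μ f).measurable
  refine le_trans (haarLpNorm_mono fun t _ => ?_) (haarLpNorm_lintegral_dilation_le (by fun_prop)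
    measurable_id (ae_restrict_of_forall_mem measurableSet_Ioo fun s hs => hs.1) (by fun_prop) hq)
  rw [avgRearr, ← lintegral_const_mul _ (by fun_prop)]
  refine (setLIntegral_congr_fun measurableSet_Ioo fun s hs => ?_).le
  simp only [id]
  rw [ofReal_rpow_eq_mul_ofReal_mul_rpow hs.1, mul_assoc]

theorem setLIntegral_Ioo_zero_one_ofReal_rpow_ne_top {a : ℝ} (ha : -1 < a) :
    ∫⁻ s in Ioo (0 : ℝ) 1, ENNReal.ofReal s ^ a ≠ ∞ := by
  have h_int : IntegrableOn (fun s : ℝ => s ^ a) (Ioo 0 1) :=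
    (intervalIntegral.integrableOn_Ioo_rpow_iff one_pos).2 ha
  rw [setLIntegral_congr_fun measurableSet_Ioo fun s hs => ENNReal.ofReal_rpow_of_pos hs.1]
  exact h_int.lintegral_lt_top.ne

theorem tsum_ofReal_two_pow_rpow_ne_top {a : ℝ} (ha : a < 0) :
    ∑' k : ℕ, ENNReal.ofReal (2 ^ k) ^ a ≠ ∞ := by
  have h_ratio : (2 : ℝ≥0∞) ^ a < 1 := ENNReal.rpow_lt_one_of_one_lt_of_neg (by norm_num) ha
  have h_geom (k : ℕ) : ENNReal.ofReal (2 ^ k) ^ a = ((2 : ℝ≥0∞) ^ a) ^ k := by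
    rw [ENNReal.ofReal_pow zero_le_two, ENNReal.ofReal_ofNat, ← ENNReal.rpow_natCast,
      ← ENNReal.rpow_mul, mul_comm, ENNReal.rpow_mul, ENNReal.rpow_natCast]
  simp only [h_geom, ENNReal.tsum_geometric]
  exact ENNReal.inv_ne_top.2 (tsub_pos_of_lt h_ratio).ne'

end HaarLpNorm

section Cutoff

theorem deriv_smoothTransition_eq_zero {y : ℝ} (hy : y ∉ Ioo 0 1) :
    deriv Real.smoothTransition y = 0 := by
  rcases le_or_gt y 0 with h_le | h_pos
  · refine IsLocalMin.deriv_eq_zero (.of_forall fun z => ?_)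
    exact (Real.smoothTransition.zero_of_nonpos h_le).trans_le (Real.smoothTransition.nonneg z)
  · have h_one_le : 1 ≤ y := not_lt.1 fun h_lt => hy ⟨h_pos, h_lt⟩
    refine IsLocalMax.deriv_eq_zero (.of_forall fun z => ?_)
    exact (Real.smoothTransition.le_one z).trans_eq
      (Real.smoothTransition.one_of_one_le h_one_le).symm

theorem exists_abs_deriv_smoothTransition_le :
    ∃ M, ∀ y, |deriv Real.smoothTransition y| ≤ M := by
  have h_cont : Continuous (deriv Real.smoothTransition) :=
    (Real.smoothTransition.contDiff (n := 1)).continuous_deriv le_rfl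
  exact h_cont.bounded_above_of_compact_support <| .intro isCompact_Icc fun y hy =>
    deriv_smoothTransition_eq_zero fun h => hy (Ioo_subset_Icc_self h)

/-- A smooth even cutoff on `ℝ` that vanishes for `|s| ≤ a` and equals `1` for `|s| ≥ b`; squaring
`s` avoids the singularity of `|s|` at the origin. Meant for `0 ≤ a < b`. -/
noncomputable def absCutoff (a b s : ℝ) : ℝ :=
  Real.smoothTransition ((s ^ 2 - a ^ 2) / (b ^ 2 - a ^ 2))

variable {a b s : ℝ}

theorem absCutoff_contDiff (a b : ℝ) : ContDiff ℝ 1 (absCutoff a b) :=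
  (Real.smoothTransition.contDiff (n := 1)).comp (by fun_prop)

theorem absCutoff_eq_zero (ha : 0 ≤ a) (hab : a < b) (hs : |s| ≤ a) : absCutoff a b s = 0 :=
  Real.smoothTransition.zero_of_nonpos <| div_nonpos_of_nonpos_of_nonneg
    (sub_nonpos.2 (sq_le_sq.2 (hs.trans (le_abs_self a))))
    (sub_nonneg.2 (pow_le_pow_left₀ ha hab.le 2))

theorem absCutoff_eq_one (ha : 0 ≤ a) (hab : a < b) (hs : b ≤ |s|) : absCutoff a b s = 1 := by
  have h_sq : b ^ 2 ≤ s ^ 2 := sq_le_sq.2 ((abs_of_nonneg (ha.trans hab.le)).trans_le hs)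
  refine Real.smoothTransition.one_of_one_le ((one_le_div ?_).2 (by gcongr))
  exact sub_pos.2 (pow_lt_pow_left₀ hab ha two_ne_zero)

theorem hasDerivAt_absCutoff (a b s : ℝ) :
    HasDerivAt (absCutoff a b) (deriv Real.smoothTransition ((s ^ 2 - a ^ 2) / (b ^ 2 - a ^ 2)) *
      (2 * s / (b ^ 2 - a ^ 2))) s := by
  have h_inner : HasDerivAt (fun s : ℝ => (s ^ 2 - a ^ 2) / (b ^ 2 - a ^ 2))
      (2 * s / (b ^ 2 - a ^ 2)) s := by
    simpa using ((hasDerivAt_pow 2 s).sub_const (a ^ 2)).div_const (b ^ 2 - a ^ 2)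
  exact ((Real.smoothTransition.contDiff (n := 1)).differentiable one_ne_zero _).hasDerivAt.comp s
    h_inner

theorem deriv_absCutoff_eq_zero (ha : 0 ≤ a) (hab : a < b) (hs : |s| ∉ Ioo a b) :
    deriv (absCutoff a b) s = 0 := by
  have h_pos : 0 < b ^ 2 - a ^ 2 := sub_pos.2 (pow_lt_pow_left₀ hab ha two_ne_zero)
  rw [(hasDerivAt_absCutoff a b s).deriv, deriv_smoothTransition_eq_zero, zero_mul]
  rintro ⟨h_gt, h_lt⟩
  refine hs ⟨?_, ?_⟩
  · exact lt_of_pow_lt_pow_left₀ 2 (abs_nonneg s) (by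
      simpa [sq_abs] using (div_pos_iff_of_pos_right h_pos).1 h_gt)
  · exact lt_of_pow_lt_pow_left₀ 2 (ha.trans hab.le) (by
      simpa [sq_abs] using (div_lt_one h_pos).1 h_lt)

theorem abs_deriv_absCutoff_le {M : ℝ} (hM : ∀ y, |deriv Real.smoothTransition y| ≤ M)
    (ha : 0 ≤ a) (hab : a < b) (s : ℝ) : |deriv (absCutoff a b) s| ≤ 2 * M / (b - a) := by
  have hM₀ : 0 ≤ M := (abs_nonneg _).trans (hM 0)
  have h_sub : 0 < b - a := sub_pos.2 hab
  by_cases hs : |s| ∈ Ioo a b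
  · have h_add : 0 < b + a := by linarith
    have h_inner : |2 * s / (b ^ 2 - a ^ 2)| ≤ 2 / (b - a) :=
      calc |2 * s / (b ^ 2 - a ^ 2)| = 2 * |s| / ((b + a) * (b - a)) := by
            rw [sq_sub_sq, abs_div, abs_mul, abs_two, abs_of_pos (mul_pos h_add h_sub)]
        _ ≤ 2 * (b + a) / ((b + a) * (b - a)) := by
            gcongr
            linarith [hs.2]
        _ = 2 / (b - a) := by field_simp
    calc |deriv (absCutoff a b) s| ≤ M * (2 / (b - a)) := by
          rw [(hasDerivAt_absCutoff a b s).deriv, abs_mul]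
          gcongr
          exact hM _
      _ = 2 * M / (b - a) := by ring
  · rw [deriv_absCutoff_eq_zero ha hab hs, abs_zero]
    positivity

end Cutoff

section Sobolev

open Module

variable {E : Type*} [NormedAddCommGroup E] [NormedSpace ℝ E] {f : E → ℝ}

theorem enorm_fderiv_absCutoff_comp_le {M : ℝ} (hM : ∀ y, |deriv Real.smoothTransition y| ≤ M)
    (hf : Differentiable ℝ f) {a b : ℝ} (ha : 0 ≤ a) (hab : a < b) (x : E) :
    ‖fderiv ℝ (absCutoff a b ∘ f) x‖ₑ ≤ ENNReal.ofReal (2 * M / (b - a)) *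
      {x | a < |f x|}.indicator (fun x => ‖fderiv ℝ f x‖ₑ) x := by
  have h_chain : fderiv ℝ (absCutoff a b ∘ f) x = deriv (absCutoff a b) (f x) • fderiv ℝ f x :=
    ((hasDerivAt_absCutoff a b (f x)).differentiableAt.hasDerivAt.comp_hasFDerivAt x
      (hf x).hasFDerivAt).fderiv
  rw [h_chain, enorm_smul]
  by_cases hx : a < |f x|
  · rw [indicator_of_mem (show x ∈ {x | a < |f x|} from hx), Real.enorm_eq_ofReal_abs]
    gcongr
    exact abs_deriv_absCutoff_le hM ha hab _
  · rw [deriv_absCutoff_eq_zero ha hab fun h => hx h.1, enorm_zero, zero_mul]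
    exact zero_le

variable [MeasurableSpace E] [BorelSpace E] [FiniteDimensional ℝ E] (μ : Measure E)
  [μ.IsAddHaarMeasure]

theorem exists_measure_rpow_le_lintegral_enorm_fderiv (hE : 1 < finrank ℝ E) :
    ∃ C : ℝ≥0∞, C ≠ ∞ ∧ ∀ u : E → ℝ, ContDiff ℝ 1 u → HasCompactSupport u →
      μ {x | 1 ≤ ‖u x‖ₑ} ^ (1 - (finrank ℝ E : ℝ)⁻¹) ≤ C * ∫⁻ x, ‖fderiv ℝ u x‖ₑ ∂μ := by
  have h_conj : NNReal.HolderConjugate (finrank ℝ E) (NNReal.conjExponent (finrank ℝ E)) :=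
    .conjExponent (by exact_mod_cast hE)
  set r := NNReal.conjExponent (finrank ℝ E)
  have hr : 0 < r := h_conj.symm.pos
  have hr_inv : (r : ℝ)⁻¹ = 1 - (finrank ℝ E : ℝ)⁻¹ := by
    simpa using h_conj.coe.one_sub_inv.symm
  refine ⟨eLpNormLESNormFDerivOneConst μ r, ENNReal.coe_ne_top, fun u hu hu_supp => ?_⟩
  calc μ {x | 1 ≤ ‖u x‖ₑ} ^ (1 - (finrank ℝ E : ℝ)⁻¹)
      ≤ (1 * μ {x | 1 ≤ ‖u x‖ₑ ^ (r : ℝ)}) ^ (r : ℝ)⁻¹ := by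
        rw [one_mul, ← hr_inv]
        exact ENNReal.rpow_le_rpow
          (measure_mono fun x hx => ENNReal.one_le_rpow hx (by exact_mod_cast hr)) (by positivity)
    _ ≤ eLpNorm u r μ := by
        simpa using pow_mul_meas_ge_le_eLpNorm μ (by simpa using hr.ne') ENNReal.coe_ne_top
          hu.continuous.aestronglyMeasurable 1
    _ ≤ _ := by
        rw [← eLpNorm_one_eq_lintegral_enorm]
        exact eLpNorm_le_eLpNorm_fderiv_one μ hu hu_supp h_conj

theorem exists_ofReal_sub_mul_measure_rpow_le (hE : 1 < finrank ℝ E) :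
    ∃ C : ℝ≥0∞, C ≠ ∞ ∧ ∀ f : E → ℝ, ContDiff ℝ 1 f → HasCompactSupport f → ∀ a b : ℝ,
      0 ≤ a → a < b → ENNReal.ofReal (b - a) * μ {x | b < |f x|} ^ (1 - (finrank ℝ E : ℝ)⁻¹) ≤
        C * ∫⁻ x in {x | a < |f x|}, ‖fderiv ℝ f x‖ₑ ∂μ := by
  obtain ⟨M, hM⟩ := exists_abs_deriv_smoothTransition_le
  obtain ⟨C, hC, h_weak⟩ := exists_measure_rpow_le_lintegral_enorm_fderiv μ hE
  refine ⟨C * ENNReal.ofReal (2 * M), ENNReal.mul_ne_top hC ENNReal.ofReal_ne_top,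
    fun f hf hf_supp a b ha hab => ?_⟩
  set I := ∫⁻ x in {x | a < |f x|}, ‖fderiv ℝ f x‖ₑ ∂μ
  have h_sub : 0 < b - a := sub_pos.2 hab
  have h_supp : HasCompactSupport (absCutoff a b ∘ f) :=
    hf_supp.comp_left (absCutoff_eq_zero ha hab (by simpa using ha))
  have h_subset : {x | b < |f x|} ⊆ {x | 1 ≤ ‖(absCutoff a b ∘ f) x‖ₑ} := fun x hx => by
    simp [absCutoff_eq_one ha hab (le_of_lt hx)]
  have h_exp : 0 ≤ 1 - (finrank ℝ E : ℝ)⁻¹ :=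
    sub_nonneg.2 (inv_le_one_of_one_le₀ (by exact_mod_cast hE.le))
  have h_fderiv : ∫⁻ x, ‖fderiv ℝ (absCutoff a b ∘ f) x‖ₑ ∂μ ≤
      ENNReal.ofReal (2 * M / (b - a)) * I :=
    calc ∫⁻ x, ‖fderiv ℝ (absCutoff a b ∘ f) x‖ₑ ∂μ
        ≤ ∫⁻ x, ENNReal.ofReal (2 * M / (b - a)) *
            {x | a < |f x|}.indicator (fun x => ‖fderiv ℝ f x‖ₑ) x ∂μ := lintegral_mono <|
          enorm_fderiv_absCutoff_comp_le hM (hf.differentiable one_ne_zero) ha hab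
      _ = ENNReal.ofReal (2 * M / (b - a)) * I := by
          rw [lintegral_const_mul' _ _ ENNReal.ofReal_ne_top,
            lintegral_indicator (measurableSet_lt measurable_const hf.continuous.abs.measurable)]
  calc ENNReal.ofReal (b - a) * μ {x | b < |f x|} ^ (1 - (finrank ℝ E : ℝ)⁻¹)
      ≤ ENNReal.ofReal (b - a) * (C * (ENNReal.ofReal (2 * M / (b - a)) * I)) := by
        gcongr
        exact (ENNReal.rpow_le_rpow (measure_mono h_subset) h_exp).trans
          ((h_weak _ ((absCutoff_contDiff a b).comp hf) h_supp).trans (by gcongr))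
    _ = C * (ENNReal.ofReal (b - a) * ENNReal.ofReal (2 * M / (b - a))) * I := by ring
    _ = C * ENNReal.ofReal (2 * M) * I := by
        rw [← ENNReal.ofReal_mul h_sub.le, mul_div_cancel₀ _ h_sub.ne']

theorem exists_sub_mul_distribFn_rpow_le (hE : 1 < finrank ℝ E) :
    ∃ C : ℝ≥0∞, C ≠ ∞ ∧ ∀ f : E → ℝ, ContDiff ℝ 1 f → HasCompactSupport f → ∀ a b : ℝ≥0∞,
      (b - a) * distribFn μ f b ^ (1 - (finrank ℝ E : ℝ)⁻¹) ≤
        C * ∫⁻ x in {x | a < ENNReal.ofReal |f x|}, ‖fderiv ℝ f x‖ₑ ∂μ := by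
  obtain ⟨C, hC, h_level⟩ := exists_ofReal_sub_mul_measure_rpow_le μ hE
  refine ⟨C, hC, fun f hf hf_supp a b => ?_⟩
  have h_exp : 0 < 1 - (finrank ℝ E : ℝ)⁻¹ :=
    sub_pos.2 (inv_lt_one_of_one_lt₀ (by exact_mod_cast hE))
  rcases le_or_gt b a with h_le | h_lt
  · simp [tsub_eq_zero_of_le h_le]
  rcases eq_or_ne b ∞ with rfl | hb
  · simp [distribFn, ENNReal.zero_rpow_of_pos h_exp]
  lift b to NNReal using hb
  lift a to NNReal using h_lt.ne_top
  simp only [← ENNReal.ofReal_coe_nnreal] at h_lt ⊢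
  rw [← ENNReal.ofReal_sub _ a.coe_nonneg, distribFn_ofReal μ f b.coe_nonneg]
  simpa only [ENNReal.ofReal_lt_ofReal_iff_of_nonneg a.coe_nonneg] using
    h_level f hf hf_supp a b a.coe_nonneg (by simpa using h_lt)

theorem exists_rearr_le_rearr_two_mul_add (hE : 1 < finrank ℝ E) :
    ∃ C : ℝ≥0∞, C ≠ ∞ ∧ ∀ f : E → ℝ, ContDiff ℝ 1 f → HasCompactSupport f → ∀ t, 0 < t →
      rearr μ f t ≤ rearr μ f (2 * t) +
        C * (ENNReal.ofReal t ^ (finrank ℝ E : ℝ)⁻¹ * avgRearr μ (fun x => ‖fderiv ℝ f x‖) t) := by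
  obtain ⟨C, hC, h_level⟩ := exists_sub_mul_distribFn_rpow_le μ hE
  refine ⟨C * 2, ENNReal.mul_ne_top hC ENNReal.ofNat_ne_top, fun f hf hf_supp t ht => ?_⟩
  set θ : ℝ := (finrank ℝ E : ℝ)⁻¹
  set A := avgRearr μ (fun x => ‖fderiv ℝ f x‖)
  set T := ENNReal.ofReal t
  have hθ : 0 ≤ 1 - θ := sub_nonneg.2 (inv_le_one_of_one_le₀ (by exact_mod_cast hE.le))
  have hT : T ≠ 0 := by simpa [T] using ht
  have hT_top : T ≠ ∞ := ENNReal.ofReal_ne_top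
  have h_integral : ∫⁻ x in {x | rearr μ f (2 * t) < ENNReal.ofReal |f x|}, ‖fderiv ℝ f x‖ₑ ∂μ ≤
      2 * T * A t :=
    calc ∫⁻ x in {x | rearr μ f (2 * t) < ENNReal.ofReal |f x|}, ‖fderiv ℝ f x‖ₑ ∂μ
        ≤ ENNReal.ofReal (2 * t) * A (2 * t) := by
          simpa using setLIntegral_ofReal_abs_le_mul_avgRearr
            (hf.continuous_fderiv one_ne_zero).norm.aemeasurable (mul_pos two_pos ht)
            (distribFn_rearr_le μ f (2 * t))
      _ ≤ 2 * T * A t := by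
          rw [ENNReal.ofReal_mul zero_le_two, ENNReal.ofReal_ofNat]
          gcongr
          exact avgRearr_antitone _ _ (by linarith)
  refine le_of_forall_lt_imp_le_of_dense fun b hb => tsub_le_iff_left.1 ?_
  calc b - rearr μ f (2 * t) = (b - rearr μ f (2 * t)) * T ^ (1 - θ) * T ^ (θ - 1) := by
        rw [mul_assoc, ← ENNReal.rpow_add _ _ hT hT_top]
        simp
    _ ≤ C * (2 * T * A t) * T ^ (θ - 1) := by
        gcongr ?_ * _
        calc (b - rearr μ f (2 * t)) * T ^ (1 - θ)
            ≤ (b - rearr μ f (2 * t)) * distribFn μ f b ^ (1 - θ) := by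
              gcongr
              exact (lt_rearr_iff.1 hb).le
          _ ≤ C * (2 * T * A t) := (h_level f hf hf_supp _ b).trans (by gcongr)
    _ = C * 2 * (T ^ (1 + (θ - 1)) * A t) := by
        rw [ENNReal.rpow_add _ _ hT hT_top, ENNReal.rpow_one]
        ring
    _ = C * 2 * (T ^ θ * A t) := by rw [add_sub_cancel]

theorem exists_rpow_mul_rearr_le_tsum (hE : 1 < finrank ℝ E) :
    ∃ C : ℝ≥0∞, C ≠ ∞ ∧ ∀ f : E → ℝ, ContDiff ℝ 1 f → HasCompactSupport f → ∀ a t, 0 < t →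
      ENNReal.ofReal t ^ (a - (finrank ℝ E : ℝ)⁻¹) * rearr μ f t ≤
        ∑' k : ℕ, C * ENNReal.ofReal (2 ^ k) ^ ((finrank ℝ E : ℝ)⁻¹ - a) *
          (ENNReal.ofReal (2 ^ k * t) ^ a * avgRearr μ (fun x => ‖fderiv ℝ f x‖) (2 ^ k * t)) := by
  obtain ⟨C, hC, h_step⟩ := exists_rearr_le_rearr_two_mul_add μ hE
  refine ⟨C, hC, fun f hf hf_supp a t ht => ?_⟩
  set θ : ℝ := (finrank ℝ E : ℝ)⁻¹
  set A := avgRearr μ (fun x => ‖fderiv ℝ f x‖)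
  have h_finite : μ (Function.support f) ≠ ∞ :=
    ((measure_mono (subset_tsupport f)).trans_lt hf_supp.measure_lt_top).ne
  calc ENNReal.ofReal t ^ (a - θ) * rearr μ f t
      ≤ ENNReal.ofReal t ^ (a - θ) *
          ∑' k : ℕ, C * (ENNReal.ofReal (2 ^ k * t) ^ θ * A (2 ^ k * t)) := by
        gcongr
        exact rearr_le_tsum_of_le_rearr_two_mul_add h_finite (h_step f hf hf_supp) ht
    _ = ∑' k : ℕ, ENNReal.ofReal t ^ (a - θ) *
          (C * (ENNReal.ofReal (2 ^ k * t) ^ θ * A (2 ^ k * t))) := ENNReal.tsum_mul_left.symm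
    _ = _ := by
        refine tsum_congr fun k => ?_
        have h_rpow : ENNReal.ofReal (2 ^ k * t) ^ a =
            ENNReal.ofReal (2 ^ k * t) ^ (a - θ) * ENNReal.ofReal (2 ^ k * t) ^ θ := by
          rw [← ENNReal.rpow_add _ _ (by simpa using by positivity) ENNReal.ofReal_ne_top,
            sub_add_cancel]
        rw [ofReal_rpow_eq_mul_ofReal_mul_rpow (s := 2 ^ k) (by positivity) t, neg_sub, h_rpow]
        ring

theorem exists_haarLpNorm_rpow_mul_rearr_le (hE : 1 < finrank ℝ E) {a : ℝ}
    (ha : (finrank ℝ E : ℝ)⁻¹ < a) {q : ℝ≥0∞} (hq : 1 ≤ q) :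
    ∃ W : ℝ≥0∞, W ≠ ∞ ∧ ∀ f : E → ℝ, ContDiff ℝ 1 f → HasCompactSupport f →
      haarLpNorm q (fun t => ENNReal.ofReal t ^ (a - (finrank ℝ E : ℝ)⁻¹) * rearr μ f t) ≤
        W * haarLpNorm q
          fun t => ENNReal.ofReal t ^ a * avgRearr μ (fun x => ‖fderiv ℝ f x‖) t := by
  obtain ⟨C, hC, h_tsum⟩ := exists_rpow_mul_rearr_le_tsum μ hE
  refine ⟨∑' k : ℕ, C * ENNReal.ofReal (2 ^ k) ^ ((finrank ℝ E : ℝ)⁻¹ - a), ?_,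
    fun f hf hf_supp => ?_⟩
  · rw [ENNReal.tsum_mul_left]
    exact ENNReal.mul_ne_top hC (tsum_ofReal_two_pow_rpow_ne_top (sub_neg.2 ha))
  · have h_meas : Measurable (avgRearr μ fun x => ‖fderiv ℝ f x‖) :=
      (avgRearr_antitone _ _).measurable
    exact (haarLpNorm_mono (h_tsum f hf hf_supp a)).trans <|
      haarLpNorm_tsum_dilation_le _ (fun k => by positivity) (by fun_prop) hq

theorem stmt_9_general {p : ℝ} (hp1 : 1 < p) (hpn : p < finrank ℝ E) {q : ℝ≥0∞} (hq : 1 ≤ q) :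
    ∃ c : ℝ, 0 < c ∧ ∀ f : E → ℝ, ContDiff ℝ 1 f → HasCompactSupport f →
      lorentz μ (ENNReal.ofReal (finrank ℝ E * p / (finrank ℝ E - p))) q f ≤
        ENNReal.ofReal c * lorentz μ (ENNReal.ofReal p) q (fun x => ‖fderiv ℝ f x‖) := by
  have hp₀ : 0 < p := one_pos.trans hp1
  obtain ⟨W, hW, h_sobolev⟩ := exists_haarLpNorm_rpow_mul_rearr_le μ
    (by exact_mod_cast hp1.trans hpn) (inv_strictAnti₀ hp₀ hpn) hq
  set n : ℝ := (finrank ℝ E : ℝ)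
  have h_sub : 0 < n - p := sub_pos.2 hpn
  have hn : 0 < n := hp₀.trans hpn
  have h_exponent : (n * p / (n - p))⁻¹ = p⁻¹ - n⁻¹ := by field_simp
  set H : ℝ≥0∞ := ∫⁻ s in Ioo (0 : ℝ) 1, ENNReal.ofReal s ^ (-p⁻¹)
  have hH : H ≠ ∞ := setLIntegral_Ioo_zero_one_ofReal_rpow_ne_top
    (neg_lt_neg (inv_lt_one_of_one_lt₀ hp1))
  have h_const : W * H ≤ ENNReal.ofReal ((W * H).toReal + 1) :=
    (ENNReal.le_ofReal_iff_toReal_le (ENNReal.mul_ne_top hW hH) (by positivity)).2 (by linarith)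
  refine ⟨(W * H).toReal + 1, by positivity, fun f hf hf_supp => ?_⟩
  simp only [lorentz_eq_haarLpNorm]
  rw [ENNReal.toReal_ofReal (by positivity), h_exponent, ENNReal.toReal_ofReal hp₀.le]
  refine (h_sobolev f hf hf_supp).trans (le_trans ?_ (mul_le_mul_left h_const _))
  rw [mul_assoc]
  gcongr
  exact haarLpNorm_rpow_mul_avgRearr_le μ _ _ hq

end Sobolev

/-- Sobolev inequality in Lorentz spaces on ℝⁿ:
`‖f‖_{np/(n-p),q} ≤ c ‖|∇f|‖_{p,q}`. -/
theorem stmt_9 (n : ℕ) (hn : 2 ≤ n) (p : ℝ) (hp1 : 1 < p) (hpn : p < n)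
    (q : ℝ≥0∞) (hq : 1 ≤ q) :
    ∃ c : ℝ, 0 < c ∧ ∀ f : EuclideanSpace ℝ (Fin n) → ℝ,
      ContDiff ℝ (⊤ : ℕ∞) f → HasCompactSupport f →
      lorentz volume (ENNReal.ofReal ((n : ℝ) * p / ((n : ℝ) - p))) q f ≤
        ENNReal.ofReal c *
          lorentz volume (ENNReal.ofReal p) q (fun x => ‖gradient f x‖) := by
  obtain ⟨c, hc, h⟩ := stmt_9_general (E := EuclideanSpace ℝ (Fin n)) volume hp1 (by simpa) hq
  exact ⟨c, hc, fun f hf hf_supp => by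
    simpa [gradient] using h f (hf.of_le (by simp)) hf_supp⟩
end

section
/- Let n ≥ 2 and 1 < p < n, and suppose p ≤ q ≤ ∞. Then there exists a constant C > 0 such that for every smooth compactly supported f : ℝⁿ → ℝ, ‖f‖_{np/(n-p), q} ≤ C (∫_{ℝⁿ} |∇f(x)|^{p} dx)^{1/p}. -/
open MeasureTheory Set ENNReal

/-!
Truncating `f` smoothly between the heights `l` and `2 * l` gives a function which equals `1` on
`{2 * l < |f|}` and whose gradient is `O(|∇f| / l)`, supported on the layer `{l < |f| < 2 * l}`.
The Sobolev inequality for this truncation bounds `l * μ_f(2 * l) ^ (1 / p')` by the `L^p` norm of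
`∇f` on that layer. The layers with `l = 2 ^ k` are disjoint, so the `p`-th powers of these bounds
sum to at most `C * ‖∇f‖_p ^ p`. The sum is a discrete form of the `L^{p', p}` norm, and the
nesting of the `ℓ^q` norms passes from `p` to any `q ≥ p`.
-/

open scoped NNReal

section DyadicLorentz

theorem tsum_rpow_rpow_inv_le_of_le {ι : Type*} (a : ι → ℝ≥0∞) {p q : ℝ} (hp : 0 < p)
    (hpq : p ≤ q) :
    (∑' i, a i ^ q) ^ q⁻¹ ≤ (∑' i, a i ^ p) ^ p⁻¹ := by
  set N := (∑' i, a i ^ p) ^ p⁻¹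
  have hq : 0 < q := hp.trans_le hpq
  have hsplit (x : ℝ≥0∞) : x ^ q = x ^ p * x ^ (q - p) := by
    rw [← ENNReal.rpow_add_of_nonneg _ _ hp.le (sub_nonneg.2 hpq), add_sub_cancel]
  have hle (i : ι) : a i ≤ N := (ENNReal.le_rpow_inv_iff hp).2 (ENNReal.le_tsum i)
  rw [ENNReal.rpow_inv_le_iff hq]
  calc ∑' i, a i ^ q ≤ ∑' i, a i ^ p * N ^ (q - p) := by
        refine ENNReal.tsum_le_tsum fun i ↦ ?_
        rw [hsplit]
        exact mul_le_mul_right (ENNReal.rpow_le_rpow (hle i) (sub_nonneg.2 hpq)) _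
    _ = N ^ q := by rw [ENNReal.tsum_mul_right, hsplit N, ENNReal.rpow_inv_rpow hp.ne']

theorem setLIntegral_Ioo_rpow_div {s a : ℝ} (hs : 0 < s) (ha : 0 ≤ a) :
    ∫⁻ t in Ioo 0 a, ENNReal.ofReal t ^ s / ENNReal.ofReal t =
      ENNReal.ofReal s⁻¹ * ENNReal.ofReal a ^ s := by
  have hint : IntervalIntegrable (fun t : ℝ ↦ t ^ (s - 1)) volume 0 a :=
    intervalIntegral.intervalIntegrable_rpow' (by linarith)
  calc ∫⁻ t in Ioo 0 a, ENNReal.ofReal t ^ s / ENNReal.ofReal t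
      = ∫⁻ t in Ioc 0 a, ENNReal.ofReal (t ^ (s - 1)) := by
        rw [restrict_Ioo_eq_restrict_Ioc]
        refine setLIntegral_congr_fun measurableSet_Ioc fun t ht ↦ ?_
        rw [ENNReal.ofReal_rpow_of_pos ht.1, ← ENNReal.ofReal_div_of_pos ht.1,
          Real.rpow_sub_one ht.1.ne']
    _ = ENNReal.ofReal (∫ t in (0)..a, t ^ (s - 1)) := by
        rw [intervalIntegral.integral_of_le ha, ofReal_integral_eq_lintegral_ofReal hint.1]
        filter_upwards [ae_restrict_mem measurableSet_Ioc] with t ht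
        exact Real.rpow_nonneg ht.1.le _
    _ = ENNReal.ofReal s⁻¹ * ENNReal.ofReal a ^ s := by
        rw [integral_rpow (Or.inl (by linarith)), sub_add_cancel, Real.zero_rpow hs.ne', sub_zero,
          div_eq_inv_mul, ENNReal.ofReal_mul (by positivity),
          ENNReal.ofReal_rpow_of_nonneg ha hs.le]

theorem setLIntegral_rpow_div_le (m : ℝ≥0∞) {s : ℝ} (hs : 0 < s) :
    ∫⁻ t in {t | ENNReal.ofReal t < m} ∩ Ioi 0, ENNReal.ofReal t ^ s / ENNReal.ofReal t ≤
      ENNReal.ofReal s⁻¹ * m ^ s := by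
  obtain rfl | hm := eq_or_ne m ∞
  · simp [hs, ENNReal.top_rpow_of_pos, ENNReal.mul_top]
  have hsub : {t | ENNReal.ofReal t < m} ∩ Ioi 0 ⊆ Ioo 0 m.toReal := fun t ht ↦
    ⟨ht.2, (ENNReal.ofReal_lt_iff_lt_toReal ht.2.le hm).1 ht.1⟩
  refine (lintegral_mono_set hsub).trans_eq ?_
  rw [setLIntegral_Ioo_rpow_div hs ENNReal.toReal_nonneg, ENNReal.ofReal_toReal hm]

variable {α : Type*} [MeasurableSpace α] {μ : Measure α}

theorem distribFn_anti (f : α → ℝ) : Antitone (distribFn μ f) :=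
  fun _ _ h ↦ measure_mono fun _ hx ↦ h.trans_lt hx

theorem distribFn_coe (f : α → ℝ) (l : ℝ≥0) : distribFn μ f l = μ {x | l < ‖f x‖₊} := by
  simp only [distribFn, ← Real.enorm_eq_ofReal_abs, enorm_eq_nnnorm, ENNReal.coe_lt_coe]

theorem lt_distribFn_of_lt_rearr {f : α → ℝ} {t : ℝ} {l : ℝ≥0∞} (h : l < rearr μ f t) :
    ENNReal.ofReal t < distribFn μ f l := by
  by_contra! ht
  obtain ⟨l', hl, hl'⟩ := exists_between h
  exact hl'.not_ge (sInf_le ⟨zero_le.trans_lt hl, (distribFn_anti f hl.le).trans ht⟩)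

theorem rearr_le_iSup_zpow (f : α → ℝ) (t : ℝ) :
    rearr μ f t ≤ ⨆ (k : ℤ) (_ : ENNReal.ofReal t < distribFn μ f (2 ^ k)), 2 * 2 ^ k := by
  refine le_of_forall_lt_imp_le_of_dense fun l hl ↦ ?_
  obtain rfl | hl₀ := eq_or_ne l 0
  · exact zero_le
  obtain ⟨k, hk, hk'⟩ :=
    ENNReal.exists_mem_Ico_zpow hl₀ hl.ne_top one_lt_two ENNReal.ofNat_ne_top
  rw [ENNReal.zpow_add two_ne_zero ENNReal.ofNat_ne_top, zpow_one, mul_comm] at hk'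
  exact hk'.le.trans (le_iSup₂_of_le k (lt_distribFn_of_lt_rearr (hk.trans_lt hl)) le_rfl)

/-- The dyadic form `(∑ₖ (2ᵏ μ_f(2ᵏ)^{1/r})^q)^{1/q}` of the Lorentz `L^{r,q}` (quasi)norm, which
samples the distribution function at the heights `2ᵏ`, `k ∈ ℤ`. -/
noncomputable def dyadicLorentz (μ : Measure α) (r : ℝ≥0∞) (q : ℝ) (f : α → ℝ) : ℝ≥0∞ :=
  (∑' k : ℤ, (2 ^ k * distribFn μ f (2 ^ k) ^ r.toReal⁻¹) ^ q) ^ q⁻¹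

theorem dyadicLorentz_anti (r : ℝ≥0∞) (f : α → ℝ) {p q : ℝ} (hp : 0 < p) (hpq : p ≤ q) :
    dyadicLorentz μ r q f ≤ dyadicLorentz μ r p f :=
  tsum_rpow_rpow_inv_le_of_le _ hp hpq

theorem lorentz_top_le_dyadicLorentz (r : ℝ≥0∞) (f : α → ℝ) {p : ℝ} (hp : 0 < p) :
    lorentz μ r ∞ f ≤ 2 * dyadicLorentz μ r p f := by
  rw [lorentz, if_pos rfl]
  refine iSup₂_le fun t _ ↦ ?_
  calc ENNReal.ofReal t ^ r.toReal⁻¹ * rearr μ f t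
      ≤ ENNReal.ofReal t ^ r.toReal⁻¹ *
          ⨆ (k : ℤ) (_ : ENNReal.ofReal t < distribFn μ f (2 ^ k)), 2 * 2 ^ k := by
        gcongr
        exact rearr_le_iSup_zpow f t
    _ ≤ 2 * dyadicLorentz μ r p f := by
        simp only [ENNReal.mul_iSup]
        refine iSup₂_le fun k hk ↦ ?_
        rw [mul_left_comm, mul_comm (_ ^ _)]
        gcongr
        calc 2 ^ k * ENNReal.ofReal t ^ r.toReal⁻¹
            ≤ 2 ^ k * distribFn μ f (2 ^ k) ^ r.toReal⁻¹ := by gcongr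
          _ ≤ dyadicLorentz μ r p f :=
            (ENNReal.le_rpow_inv_iff hp).2
              (ENNReal.le_tsum (f := fun k : ℤ ↦
                (2 ^ k * distribFn μ f (2 ^ k) ^ r.toReal⁻¹) ^ p) k)

theorem rearr_rpow_le_tsum (f : α → ℝ) (t : ℝ) {q : ℝ} (hq : 0 < q) :
    rearr μ f t ^ q ≤
      ∑' k : ℤ, {t | ENNReal.ofReal t < distribFn μ f (2 ^ k)}.indicator 1 t * (2 * 2 ^ k) ^ q := by
  rw [← ENNReal.le_rpow_inv_iff hq]
  refine (rearr_le_iSup_zpow f t).trans (iSup₂_le fun k hk ↦ ?_)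
  rw [ENNReal.le_rpow_inv_iff hq]
  refine le_trans ?_ (ENNReal.le_tsum k)
  simp [hk]

theorem lintegral_mul_rearr_rpow_le (ν : Measure ℝ) {w : ℝ → ℝ≥0∞} (hw : Measurable w)
    (f : α → ℝ) {q : ℝ} (hq : 0 < q) :
    ∫⁻ t, w t * rearr μ f t ^ q ∂ν ≤
      ∑' k : ℤ, (2 * 2 ^ k) ^ q *
        ∫⁻ t in {t | ENNReal.ofReal t < distribFn μ f (2 ^ k)}, w t ∂ν := by
  let S (k : ℤ) : Set ℝ := {t | ENNReal.ofReal t < distribFn μ f (2 ^ k)}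
  have hS (k : ℤ) : MeasurableSet (S k) :=
    measurableSet_lt ENNReal.measurable_ofReal measurable_const
  calc ∫⁻ t, w t * rearr μ f t ^ q ∂ν
      ≤ ∫⁻ t, ∑' k : ℤ, (2 * 2 ^ k) ^ q * (S k).indicator w t ∂ν := by
        refine lintegral_mono fun t ↦ ?_
        calc w t * rearr μ f t ^ q
            ≤ w t * ∑' k : ℤ, (S k).indicator 1 t * (2 * 2 ^ k) ^ q :=
              mul_le_mul_right (rearr_rpow_le_tsum f t hq) _
          _ = ∑' k : ℤ, (2 * 2 ^ k) ^ q * (S k).indicator w t := by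
              rw [← ENNReal.tsum_mul_left]
              refine tsum_congr fun k ↦ ?_
              by_cases ht : t ∈ S k <;> simp [ht, mul_comm]
    _ = ∑' k : ℤ, (2 * 2 ^ k) ^ q * ∫⁻ t in S k, w t ∂ν := by
        rw [lintegral_tsum fun k ↦ ((hw.indicator (hS k)).const_mul _).aemeasurable]
        refine tsum_congr fun k ↦ ?_
        rw [lintegral_const_mul _ (hw.indicator (hS k)), lintegral_indicator (hS k)]

theorem lintegral_rpow_mul_rearr_rpow_le (f : α → ℝ) {s q : ℝ} (hs : 0 < s) (hq : 0 < q) :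
    ∫⁻ t in Ioi (0 : ℝ), (ENNReal.ofReal t ^ s * rearr μ f t) ^ q / ENNReal.ofReal t ≤
      2 ^ q * ENNReal.ofReal (s * q)⁻¹ * ∑' k : ℤ, (2 ^ k * distribFn μ f (2 ^ k) ^ s) ^ q := by
  let w (t : ℝ) : ℝ≥0∞ := ENNReal.ofReal t ^ (s * q) / ENNReal.ofReal t
  have hw : Measurable w :=
    (ENNReal.measurable_ofReal.pow_const _).div ENNReal.measurable_ofReal
  calc ∫⁻ t in Ioi (0 : ℝ), (ENNReal.ofReal t ^ s * rearr μ f t) ^ q / ENNReal.ofReal t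
      = ∫⁻ t in Ioi (0 : ℝ), w t * rearr μ f t ^ q := by
        simp only [w, ENNReal.mul_rpow_of_nonneg _ _ hq.le, ← ENNReal.rpow_mul,
          ENNReal.mul_div_right_comm]
    _ ≤ ∑' k : ℤ, (2 * 2 ^ k) ^ q *
          ∫⁻ t in {t | ENNReal.ofReal t < distribFn μ f (2 ^ k)}, w t ∂volume.restrict (Ioi 0) :=
        lintegral_mul_rearr_rpow_le _ hw f hq
    _ ≤ ∑' k : ℤ, (2 * 2 ^ k) ^ q *
          (ENNReal.ofReal (s * q)⁻¹ * distribFn μ f (2 ^ k) ^ (s * q)) := by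
        gcongr with k
        rw [Measure.restrict_restrict
          (measurableSet_lt ENNReal.measurable_ofReal measurable_const)]
        exact setLIntegral_rpow_div_le _ (by positivity)
    _ = 2 ^ q * ENNReal.ofReal (s * q)⁻¹ * ∑' k : ℤ, (2 ^ k * distribFn μ f (2 ^ k) ^ s) ^ q := by
        rw [← ENNReal.tsum_mul_left]
        refine tsum_congr fun k ↦ ?_
        simp only [ENNReal.mul_rpow_of_nonneg _ _ hq.le, ENNReal.rpow_mul]
        ring

theorem lorentz_le_dyadicLorentz {r q : ℝ≥0∞} (hr : 0 < r.toReal) (hq : 0 < q.toReal)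
    (f : α → ℝ) :
    lorentz μ r q f ≤ (2 ^ q.toReal * ENNReal.ofReal (r.toReal⁻¹ * q.toReal)⁻¹) ^ q.toReal⁻¹ *
      dyadicLorentz μ r q.toReal f := by
  rw [lorentz, if_neg (ENNReal.toReal_pos_iff.1 hq).2.ne, dyadicLorentz,
    ← ENNReal.mul_rpow_of_nonneg _ _ (by positivity)]
  gcongr
  exact lintegral_rpow_mul_rearr_rpow_le f (by positivity) hq

theorem exists_lorentz_le_mul_dyadicLorentz (μ : Measure α) {r q : ℝ≥0∞} {p : ℝ}
    (hr : 0 < r.toReal) (hp : 0 < p) (hpq : ENNReal.ofReal p ≤ q) :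
    ∃ C : ℝ≥0, ∀ f : α → ℝ, lorentz μ r q f ≤ C * dyadicLorentz μ r p f := by
  obtain rfl | hq := eq_or_ne q ∞
  · exact ⟨2, fun f ↦ mod_cast lorentz_top_le_dyadicLorentz r f hp⟩
  have hpq' : p ≤ q.toReal := (ENNReal.ofReal_le_iff_le_toReal hq).1 hpq
  have hq₀ : 0 < q.toReal := hp.trans_le hpq'
  lift (2 ^ q.toReal * ENNReal.ofReal (r.toReal⁻¹ * q.toReal)⁻¹) ^ q.toReal⁻¹ to ℝ≥0
    using by finiteness with C hC
  refine ⟨C, fun f ↦ (lorentz_le_dyadicLorentz hr hq₀ f).trans ?_⟩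
  rw [← hC]
  gcongr
  exact dyadicLorentz_anti r f hp hpq'

end DyadicLorentz

section Truncation

/-- A smooth cutoff on `ℝ` vanishing on `[-1, 1]` and equal to `1` outside `(-2, 2)`. -/
noncomputable def layerCutoff (t : ℝ) : ℝ :=
  Real.smoothTransition (t ^ 2 - 1)

theorem contDiff_layerCutoff : ContDiff ℝ 1 layerCutoff :=
  (Real.smoothTransition.contDiff (n := 1)).comp (by fun_prop)

theorem layerCutoff_eq_zero {t : ℝ} (ht : |t| ≤ 1) : layerCutoff t = 0 :=
  Real.smoothTransition.zero_of_nonpos (sub_nonpos.2 ((sq_le_one_iff_abs_le_one t).2 ht))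

theorem layerCutoff_eq_one {t : ℝ} (ht : 2 ≤ |t|) : layerCutoff t = 1 :=
  Real.smoothTransition.one_of_one_le (by nlinarith [sq_abs t])

theorem deriv_layerCutoff_eq_zero {t : ℝ} (ht : |t| ∉ Ioo 1 2) : deriv layerCutoff t = 0 := by
  obtain h | h : |t| ≤ 1 ∨ 2 ≤ |t| := by simpa [imp_iff_not_or] using ht
  · refine IsLocalMin.deriv_eq_zero (Filter.Eventually.of_forall fun s ↦ ?_)
    rw [layerCutoff_eq_zero h]
    exact Real.smoothTransition.nonneg _
  · refine IsLocalMax.deriv_eq_zero (Filter.Eventually.of_forall fun s ↦ ?_)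
    rw [layerCutoff_eq_one h]
    exact Real.smoothTransition.le_one _

theorem exists_enorm_deriv_layerCutoff_le : ∃ M : ℝ≥0, ∀ t, ‖deriv layerCutoff t‖ₑ ≤ M := by
  have hsupp : HasCompactSupport (deriv layerCutoff) :=
    .intro (isCompact_Icc (a := -2) (b := 2)) fun t ht ↦
      deriv_layerCutoff_eq_zero fun h ↦ ht (abs_le.1 h.2.le)
  obtain ⟨M, hM⟩ :=
    hsupp.exists_bound_of_continuous (contDiff_layerCutoff.continuous_deriv le_rfl)
  exact ⟨M.toNNReal, fun t ↦ enorm_le_coe.2 (NNReal.le_toNNReal_of_coe_le (hM t))⟩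

variable {α : Type*}

/-- The smooth truncation of `f` between the heights `l` and `2 * l`, normalised so that it passes
from `0` to `1` on the layer `l < |f| < 2 * l`. -/
noncomputable def layerTruncation (l : ℝ≥0) (f : α → ℝ) (x : α) : ℝ :=
  layerCutoff ((l : ℝ)⁻¹ * f x)

/-- The open layer `{l < |f| < 2 * l}` between consecutive dyadic heights, outside which the
gradient of the truncation of `f` at height `l` vanishes. -/
def heightLayer (l : ℝ≥0) (f : α → ℝ) : Set α :=
  (‖f ·‖₊) ⁻¹' Ioo l (2 * l)

theorem measurableSet_heightLayer [MeasurableSpace α] (l : ℝ≥0) {f : α → ℝ} (hf : Measurable f) :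
    MeasurableSet (heightLayer l f) :=
  hf.nnnorm measurableSet_Ioo

theorem pairwise_disjoint_heightLayer_zpow (f : α → ℝ) :
    Pairwise (Function.onFun Disjoint fun k : ℤ ↦ heightLayer (2 ^ k) f) := by
  have hIoo : Pairwise (Function.onFun Disjoint fun k : ℤ ↦ Ioo ((2 : ℝ≥0) ^ k) (2 ^ (k + 1))) :=
    (zpow_right_mono₀ one_le_two).pairwise_disjoint_on_Ioo_succ
  simp only [zpow_add_one₀ (two_ne_zero' ℝ≥0), mul_comm _ (2 : ℝ≥0)] at hIoo
  exact fun i j hij ↦ (hIoo hij).preimage _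

theorem abs_inv_mul_eq_nnnorm_div (l : ℝ≥0) (y : ℝ) : |(l : ℝ)⁻¹ * y| = ‖y‖₊ / l := by
  rw [abs_mul, abs_inv, NNReal.abs_eq, inv_mul_eq_div, coe_nnnorm, Real.norm_eq_abs]

theorem layerTruncation_eq_one {l : ℝ≥0} (hl : l ≠ 0) {f : α → ℝ} {x : α}
    (hx : 2 * l ≤ ‖f x‖₊) : layerTruncation l f x = 1 := by
  refine layerCutoff_eq_one ?_
  rw [abs_inv_mul_eq_nnnorm_div]
  exact_mod_cast (le_div_iff₀ (pos_of_ne_zero hl)).2 hx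

theorem deriv_layerCutoff_eq_zero_of_notMem_heightLayer {l : ℝ≥0} (hl : l ≠ 0) {f : α → ℝ} {x : α}
    (hx : x ∉ heightLayer l f) : deriv layerCutoff ((l : ℝ)⁻¹ * f x) = 0 := by
  have hl' : 0 < l := pos_of_ne_zero hl
  refine deriv_layerCutoff_eq_zero fun h ↦ hx ?_
  rw [abs_inv_mul_eq_nnnorm_div] at h
  exact ⟨(one_lt_div hl').1 (mod_cast h.1), (div_lt_iff₀ hl').1 (mod_cast h.2)⟩

theorem distribFn_rpow_le_eLpNorm_layerTruncation [MeasurableSpace α] (μ : Measure α) {l : ℝ≥0}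
    (hl : l ≠ 0) {f : α → ℝ} (hf : Measurable f) {p : ℝ≥0} (hp : p ≠ 0) :
    distribFn μ f ↑(2 * l) ^ (p : ℝ)⁻¹ ≤ eLpNorm (layerTruncation l f) p μ := by
  have hmeas : Measurable (layerTruncation l f) :=
    contDiff_layerCutoff.continuous.measurable.comp (hf.const_mul _)
  have hsub : {x | 2 * l < ‖f x‖₊} ⊆ {x | 1 ≤ ‖layerTruncation l f x‖ₑ ^ (p : ℝ)} := by
    intro x hx
    have h : layerTruncation l f x = 1 := layerTruncation_eq_one hl (le_of_lt hx)
    simp [h]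
  calc distribFn μ f ↑(2 * l) ^ (p : ℝ)⁻¹
      ≤ (1 * μ {x | 1 ≤ ‖layerTruncation l f x‖ₑ ^ (p : ℝ)}) ^ (1 / (p : ℝ)) := by
        rw [distribFn_coe, one_mul, one_div]
        gcongr
    _ ≤ eLpNorm (layerTruncation l f) p μ :=
        pow_mul_meas_ge_le_eLpNorm μ (mod_cast hp) ENNReal.coe_ne_top
          hmeas.aestronglyMeasurable 1

theorem hasCompactSupport_layerTruncation [TopologicalSpace α] (l : ℝ≥0) {f : α → ℝ}
    (hf : HasCompactSupport f) : HasCompactSupport (layerTruncation l f) :=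
  hf.comp_left (g := fun y ↦ layerCutoff ((l : ℝ)⁻¹ * y)) (layerCutoff_eq_zero (by simp))

variable {E : Type*} [NormedAddCommGroup E] [NormedSpace ℝ E]

theorem contDiff_layerTruncation (l : ℝ≥0) {f : E → ℝ} (hf : ContDiff ℝ 1 f) :
    ContDiff ℝ 1 (layerTruncation l f) :=
  contDiff_layerCutoff.comp (contDiff_const.mul hf)

theorem enorm_fderiv_layerTruncation_le {M : ℝ≥0} (hM : ∀ t, ‖deriv layerCutoff t‖ₑ ≤ M)
    {l : ℝ≥0} (hl : l ≠ 0) {f : E → ℝ} {x : E} (hf : DifferentiableAt ℝ f x) :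
    ‖fderiv ℝ (layerTruncation l f) x‖ₑ ≤
      (M * l⁻¹ : ℝ≥0) * ‖(heightLayer l f).indicator (fderiv ℝ f) x‖ₑ := by
  have hderiv : fderiv ℝ (layerTruncation l f) x =
      deriv layerCutoff ((l : ℝ)⁻¹ * f x) • (l : ℝ)⁻¹ • fderiv ℝ f x :=
    ((contDiff_layerCutoff.differentiable one_ne_zero _).hasDerivAt.comp_hasFDerivAt x
      (hf.hasFDerivAt.const_mul _)).fderiv
  rw [hderiv, enorm_smul]
  by_cases hx : x ∈ heightLayer l f
  · have hl_enorm : ‖(l : ℝ)⁻¹‖ₑ = ↑l⁻¹ := by simp [enorm_eq_nnnorm]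
    rw [indicator_of_mem hx, enorm_smul, ← mul_assoc, ENNReal.coe_mul, hl_enorm]
    gcongr
    exact hM _
  · rw [deriv_layerCutoff_eq_zero_of_notMem_heightLayer hl hx, enorm_zero, zero_mul]
    exact zero_le

theorem eLpNorm_fderiv_layerTruncation_le [MeasurableSpace E] [BorelSpace E] {μ : Measure E}
    {M : ℝ≥0} (hM : ∀ t, ‖deriv layerCutoff t‖ₑ ≤ M) {l : ℝ≥0} (hl : l ≠ 0) {f : E → ℝ}
    (hf : ContDiff ℝ 1 f) (p : ℝ≥0∞) :
    eLpNorm (fderiv ℝ (layerTruncation l f)) p μ ≤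
      (M * l⁻¹ : ℝ≥0) * eLpNorm (fderiv ℝ f) p (μ.restrict (heightLayer l f)) := by
  have hindicator := eLpNorm_indicator_eq_eLpNorm_restrict (f := fderiv ℝ f) (p := p) (μ := μ)
    (measurableSet_heightLayer l hf.continuous.measurable)
  rw [← hindicator]
  exact eLpNorm_le_nnreal_smul_eLpNorm_of_ae_le_mul' (Filter.Eventually.of_forall fun x ↦
    enorm_fderiv_layerTruncation_le hM hl (hf.differentiable one_ne_zero x)) p

end Truncation

section Sobolev

theorem tsum_eLpNorm_restrict_rpow_le {α ι ε : Type*} [MeasurableSpace α] {μ : Measure α}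
    [Countable ι] [ENorm ε] {s : ι → Set α} (hs : ∀ i, MeasurableSet (s i))
    (hd : Pairwise (Function.onFun Disjoint s)) (g : α → ε) {p : ℝ≥0} (hp : p ≠ 0) :
    ∑' i, eLpNorm g p (μ.restrict (s i)) ^ (p : ℝ) ≤ eLpNorm g p μ ^ (p : ℝ) := by
  simp only [eLpNorm_nnreal_pow_eq_lintegral hp]
  rw [← lintegral_iUnion hs hd]
  exact setLIntegral_le_lintegral _ _

variable {E : Type*} [NormedAddCommGroup E] [NormedSpace ℝ E] [MeasurableSpace E] [BorelSpace E]
  [FiniteDimensional ℝ E] (μ : Measure E) [μ.IsAddHaarMeasure]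

theorem exists_mul_distribFn_rpow_le_eLpNorm_fderiv {p p' : ℝ≥0} (hp : 1 ≤ p) (hp' : p' ≠ 0)
    (hE : 0 < Module.finrank ℝ E)
    (hpp' : (p' : ℝ)⁻¹ = (p : ℝ)⁻¹ - (Module.finrank ℝ E : ℝ)⁻¹) :
    ∃ C : ℝ≥0, ∀ f : E → ℝ, ContDiff ℝ 1 f → HasCompactSupport f → ∀ l : ℝ≥0, l ≠ 0 →
      l * distribFn μ f ↑(2 * l) ^ (p' : ℝ)⁻¹ ≤
        C * eLpNorm (fderiv ℝ f) p (μ.restrict (heightLayer l f)) := by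
  obtain ⟨M, hM⟩ := exists_enorm_deriv_layerCutoff_le
  let S : ℝ≥0 := SNormLESNormFDerivOfEqConst ℝ μ p
  refine ⟨S * M, fun f hf hfc l hl ↦ ?_⟩
  set D := eLpNorm (fderiv ℝ f) p (μ.restrict (heightLayer l f))
  have hsobolev : eLpNorm (layerTruncation l f) p' μ ≤
      S * eLpNorm (fderiv ℝ (layerTruncation l f)) p μ :=
    eLpNorm_le_eLpNorm_fderiv_of_eq μ (contDiff_layerTruncation l hf)
      (hasCompactSupport_layerTruncation l hfc) hp hE (mod_cast hpp')
  calc (l : ℝ≥0∞) * distribFn μ f ↑(2 * l) ^ (p' : ℝ)⁻¹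
      ≤ l * (S * ((M * l⁻¹ : ℝ≥0) * D)) := by
        gcongr
        calc distribFn μ f ↑(2 * l) ^ (p' : ℝ)⁻¹
            ≤ eLpNorm (layerTruncation l f) p' μ :=
              distribFn_rpow_le_eLpNorm_layerTruncation μ hl hf.continuous.measurable hp'
          _ ≤ S * eLpNorm (fderiv ℝ (layerTruncation l f)) p μ := hsobolev
          _ ≤ S * ((M * l⁻¹ : ℝ≥0) * D) :=
              mul_le_mul_right (eLpNorm_fderiv_layerTruncation_le hM hl hf p) _
    _ = ↑(l * (S * (M * l⁻¹))) * D := by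
        push_cast
        ring
    _ = ↑(S * M) * D := by
        congr 2
        field_simp

theorem exists_dyadicLorentz_le_eLpNorm_fderiv {p p' : ℝ≥0} (hp : 1 ≤ p) (hp' : p' ≠ 0)
    (hE : 0 < Module.finrank ℝ E)
    (hpp' : (p' : ℝ)⁻¹ = (p : ℝ)⁻¹ - (Module.finrank ℝ E : ℝ)⁻¹) :
    ∃ C : ℝ≥0, ∀ f : E → ℝ, ContDiff ℝ 1 f → HasCompactSupport f →
      dyadicLorentz μ p' p f ≤ C * eLpNorm (fderiv ℝ f) p μ := by
  obtain ⟨C, hC⟩ := exists_mul_distribFn_rpow_le_eLpNorm_fderiv μ hp hp' hE hpp'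
  refine ⟨2 * C, fun f hf hfc ↦ ?_⟩
  have hp₀ : 0 < p := one_pos.trans_le hp
  let D (k : ℤ) : ℝ≥0∞ := eLpNorm (fderiv ℝ f) p (μ.restrict (heightLayer (2 ^ k) f))
  have hlayer (k : ℤ) :
      2 ^ (k + 1) * distribFn μ f (2 ^ (k + 1)) ^ (p' : ℝ)⁻¹ ≤ ↑(2 * C) * D k := by
    have hk : ((2 * 2 ^ k : ℝ≥0) : ℝ≥0∞) = 2 ^ (k + 1) := by
      rw [mul_comm, ← zpow_add_one₀ two_ne_zero, ENNReal.coe_zpow two_ne_zero, ENNReal.coe_ofNat]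
    calc 2 ^ (k + 1) * distribFn μ f (2 ^ (k + 1)) ^ (p' : ℝ)⁻¹
        = 2 * (↑((2 : ℝ≥0) ^ k) * distribFn μ f ↑(2 * (2 : ℝ≥0) ^ k) ^ (p' : ℝ)⁻¹) := by
          rw [← hk]
          push_cast
          ring
      _ ≤ 2 * (C * D k) := mul_le_mul_right (hC f hf hfc _ (by positivity)) 2
      _ = ↑(2 * C) * D k := by
          push_cast
          ring
  rw [dyadicLorentz, ENNReal.rpow_inv_le_iff (by positivity), ← (Equiv.addRight (1 : ℤ)).tsum_eq,
    ENNReal.mul_rpow_of_nonneg _ _ p.coe_nonneg]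
  calc ∑' k : ℤ, (2 ^ (k + 1) * distribFn μ f (2 ^ (k + 1)) ^ (p' : ℝ)⁻¹) ^ (p : ℝ)
      ≤ ∑' k, ↑(2 * C) ^ (p : ℝ) * D k ^ (p : ℝ) := by
        refine ENNReal.tsum_le_tsum fun k ↦ ?_
        rw [← ENNReal.mul_rpow_of_nonneg _ _ p.coe_nonneg]
        exact ENNReal.rpow_le_rpow (hlayer k) p.coe_nonneg
    _ ≤ ↑(2 * C) ^ (p : ℝ) * eLpNorm (fderiv ℝ f) p μ ^ (p : ℝ) := by
        rw [ENNReal.tsum_mul_left]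
        gcongr
        exact tsum_eLpNorm_restrict_rpow_le
          (fun k ↦ measurableSet_heightLayer _ hf.continuous.measurable)
          (pairwise_disjoint_heightLayer_zpow f) _ hp₀.ne'

theorem exists_lorentz_le_eLpNorm_fderiv {p p' : ℝ≥0} {q : ℝ≥0∞} (hp : 1 ≤ p) (hp' : p' ≠ 0)
    (hE : 0 < Module.finrank ℝ E)
    (hpp' : (p' : ℝ)⁻¹ = (p : ℝ)⁻¹ - (Module.finrank ℝ E : ℝ)⁻¹) (hq : p ≤ q) :
    ∃ C : ℝ≥0, ∀ f : E → ℝ, ContDiff ℝ 1 f → HasCompactSupport f →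
      lorentz μ p' q f ≤ C * eLpNorm (fderiv ℝ f) p μ := by
  obtain ⟨C₁, hC₁⟩ := exists_lorentz_le_mul_dyadicLorentz μ (r := p') (p := p)
    (NNReal.coe_pos.2 (pos_of_ne_zero hp')) (one_pos.trans_le hp) (by simpa using hq)
  obtain ⟨C₂, hC₂⟩ := exists_dyadicLorentz_le_eLpNorm_fderiv μ hp hp' hE hpp'
  refine ⟨C₁ * C₂, fun f hf hfc ↦ (hC₁ f).trans ?_⟩
  rw [ENNReal.coe_mul, mul_assoc]
  gcongr
  exact hC₂ f hf hfc

theorem stmt_10_general {p : ℝ} {q : ℝ≥0∞} (hp : 1 ≤ p) (hpn : p < Module.finrank ℝ E)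
    (hq : ENNReal.ofReal p ≤ q) :
    ∃ C : ℝ, 0 < C ∧ ∀ f : E → ℝ, ContDiff ℝ 1 f → HasCompactSupport f →
      lorentz μ (ENNReal.ofReal (Module.finrank ℝ E * p / (Module.finrank ℝ E - p))) q f ≤
        ENNReal.ofReal (C * (∫ x, ‖fderiv ℝ f x‖ ^ p ∂μ) ^ (1 / p)) := by
  set n : ℝ := (Module.finrank ℝ E : ℝ)
  have hp₀ : 0 < p := one_pos.trans_le hp
  have hn : 0 < n := hp₀.trans hpn
  have hpn' : 0 < n - p := sub_pos.2 hpn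
  have hp' : 0 < n * p / (n - p) := by positivity
  have hexponents : (n * p / (n - p))⁻¹ = p⁻¹ - n⁻¹ := by field_simp
  obtain ⟨C, hC⟩ := exists_lorentz_le_eLpNorm_fderiv μ (p := p.toNNReal)
    (p' := (n * p / (n - p)).toNNReal) (by simpa using hp) (by simpa using hp')
    (Nat.cast_pos.1 hn) (by rwa [Real.coe_toNNReal _ hp₀.le, Real.coe_toNNReal _ hp'.le]) hq
  refine ⟨C + 1, by positivity, fun f hf hfc ↦ (hC f hf hfc).trans ?_⟩
  have hgrad : MemLp (fderiv ℝ f) (ENNReal.ofReal p) μ :=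
    (hf.continuous_fderiv one_ne_zero).memLp_of_hasCompactSupport (hfc.fderiv ℝ)
  have hnorm : eLpNorm (fderiv ℝ f) (ENNReal.ofReal p) μ =
      ENNReal.ofReal ((∫ x, ‖fderiv ℝ f x‖ ^ p ∂μ) ^ (1 / p)) := by
    rw [hgrad.eLpNorm_eq_integral_rpow_norm (by simpa using hp₀) ENNReal.ofReal_ne_top,
      ENNReal.toReal_ofReal hp₀.le, one_div]
  rw [ENNReal.ofReal_mul (by positivity), ← hnorm]
  gcongr
  · exact ENNReal.ofReal_coe_nnreal.symm.trans_le (ENNReal.ofReal_le_ofReal (by simp))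
  · rfl

end Sobolev

/-- Refined Sobolev inequality: for `p ≤ q ≤ ∞`,
`‖f‖_{np/(n-p),q} ≤ C ‖∇f‖_{L^p}`. -/
theorem stmt_10 (n : ℕ) (hn : 2 ≤ n) (p : ℝ) (hp1 : 1 < p) (hpn : p < n)
    (q : ℝ≥0∞) (hq : ENNReal.ofReal p ≤ q) :
    ∃ C : ℝ, 0 < C ∧ ∀ f : EuclideanSpace ℝ (Fin n) → ℝ,
      ContDiff ℝ (⊤ : ℕ∞) f → HasCompactSupport f →
      lorentz volume (ENNReal.ofReal ((n : ℝ) * p / ((n : ℝ) - p))) q f ≤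
        ENNReal.ofReal (C * (∫ x, ‖gradient f x‖ ^ p) ^ (1 / p)) := by
  obtain ⟨C, hC, h⟩ := stmt_10_general (E := EuclideanSpace ℝ (Fin n)) volume hp1.le (by simpa) hq
  exact ⟨C, hC, fun f hf hfc ↦ by simpa [gradient] using h f (hf.of_le (mod_cast le_top)) hfc⟩
end
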